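/- arXiv:2605.28436 — 9 statements merged into one kernel-verified Lean document; each statement's English description precedes it below -/
import Mathlib

section
/- The solution set of the squared global positioning equations is exactly 𝔛 = {(b, x) ∈ ℝ × ℝⁿ : x = v + b·u + Σ_{j=1}^k yⱼ·wⱼ for some y₁,…,y_k ∈ ℝ satisfying Σ_{j=1}^k yⱼ² + (‖u‖² − 1)·b² + 2(⟨u,v⟩ − α)·b + ‖v‖² − β = 0}. -/
open scoped RealInnerProductSpace

/-!
Substituting `‖sᵢ‖² - tᵢ² = 2⟪sᵢ, v⟫ - β` and `tᵢ = ⟪u, sᵢ⟫ - α` into the `i`-th equation leaves an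
equation affine in `sᵢ`: with `z = x - (v + b • u)` it reads `⟪sᵢ, z⟫ = c`, where `c` depends on
`(b, x)` but not on `i`. That `⟪·, z⟫` takes the value `c` on all the `sᵢ` means that `z` is
orthogonal to the differences `sᵢ - sⱼ` and that `⟪v, z⟫ = c`; once `z` is orthogonal to `u`, the
latter is the quadratic equation in `b` and `‖z‖`.
-/

section InnerProductSpace

variable {E : Type*} [NormedAddCommGroup E] [InnerProductSpace ℝ E]

theorem inner_eq_inner_of_mem_orthogonal_vectorSpan {S : Set E} {p q z : E}
    (hp : p ∈ affineSpan ℝ S) (hq : q ∈ affineSpan ℝ S) (hz : z ∈ (vectorSpan ℝ S)ᗮ) :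
    ⟪p, z⟫ = ⟪q, z⟫ := by
  have hpq : p - q ∈ vectorSpan ℝ S := vsub_mem_vectorSpan_of_mem_affineSpan_of_mem_affineSpan hp hq
  rw [← sub_eq_zero, ← inner_sub_left]
  exact Submodule.inner_right_of_mem_orthogonal hpq hz

theorem mem_orthogonal_vectorSpan_of_forall_inner_eq {S : Set E} {z : E} {c : ℝ}
    (h : ∀ p ∈ S, ⟪p, z⟫ = c) : z ∈ (vectorSpan ℝ S)ᗮ := by
  rw [← Submodule.span_singleton_le_iff_mem, ← Submodule.isOrtho_iff_le, Submodule.isOrtho_comm,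
    vectorSpan_def, Submodule.isOrtho_span]
  rintro _ ⟨p, hp, q, hq, rfl⟩ z rfl
  change ⟪p - q, z⟫ = 0
  rw [inner_sub_left, h p hp, h q hq, sub_self]

theorem forall_inner_eq_iff_of_mem_affineSpan {S : Set E} {v : E} (hv : v ∈ affineSpan ℝ S)
    (z : E) (c : ℝ) :
    (∀ p ∈ S, ⟪p, z⟫ = c) ↔ z ∈ (vectorSpan ℝ S)ᗮ ∧ ⟪v, z⟫ = c := by
  constructor
  · intro h
    have hz := mem_orthogonal_vectorSpan_of_forall_inner_eq h
    obtain ⟨p, hp⟩ : S.Nonempty := (affineSpan_nonempty ℝ).mp ⟨v, hv⟩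
    exact ⟨hz, (inner_eq_inner_of_mem_orthogonal_vectorSpan hv (mem_affineSpan ℝ hp) hz).trans
      (h p hp)⟩
  · rintro ⟨hz, hvz⟩ p hp
    exact (inner_eq_inner_of_mem_orthogonal_vectorSpan (mem_affineSpan ℝ hp) hv hz).trans hvz

theorem norm_sub_sq_eq_sq_iff_inner_eq {p u v : E} {τ α β : ℝ} (hτ : ⟪u, p⟫ - α = τ)
    (hβ : 2 * ⟪p, v⟫ - β = ‖p‖ ^ 2 - τ ^ 2) (b : ℝ) (x : E) :
    ‖p - x‖ ^ 2 = (τ - b) ^ 2 ↔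
      ⟪p, x - (v + b • u)⟫ = (‖x‖ ^ 2 - b ^ 2 - 2 * α * b - β) / 2 := by
  rw [norm_sub_sq_real, inner_sub_right, inner_add_right, inner_smul_right, real_inner_comm u p]
  subst hτ
  constructor <;> intro h <;> linarith

theorem norm_add_smul_add_sq_of_inner_eq_zero {u z : E} (huz : ⟪u, z⟫ = 0) (v : E) (b : ℝ) :
    ‖v + b • u + z‖ ^ 2 =
      ‖z‖ ^ 2 + ‖u‖ ^ 2 * b ^ 2 + 2 * ⟪u, v⟫ * b + ‖v‖ ^ 2 + 2 * ⟪v, z⟫ := by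
  rw [norm_add_sq_real, norm_add_sq_real, inner_add_left, real_inner_smul_left, inner_smul_right,
    norm_smul, mul_pow, huz, real_inner_comm u v, Real.norm_eq_abs, sq_abs]
  ring

variable {ι : Type*} {s : ι → E} {t : ι → ℝ} {u v : E} {α β : ℝ}

theorem forall_norm_sub_sq_eq_sq_iff (hu : u ∈ vectorSpan ℝ (Set.range s))
    (hα : ∀ i, ⟪u, s i⟫ - α = t i) (hv : v ∈ affineSpan ℝ (Set.range s))
    (hβ : ∀ i, 2 * ⟪s i, v⟫ - β = ‖s i‖ ^ 2 - t i ^ 2) (b : ℝ) (z : E) :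
    (∀ i, ‖s i - (v + b • u + z)‖ ^ 2 = (t i - b) ^ 2) ↔
      z ∈ (vectorSpan ℝ (Set.range s))ᗮ ∧
        ‖z‖ ^ 2 + (‖u‖ ^ 2 - 1) * b ^ 2 + 2 * (⟪u, v⟫ - α) * b + ‖v‖ ^ 2 - β = 0 := by
  simp only [fun i => norm_sub_sq_eq_sq_iff_inner_eq (hα i) (hβ i), add_sub_cancel_left]
  rw [← Set.forall_mem_range (p := fun p => ⟪p, z⟫ = _), forall_inner_eq_iff_of_mem_affineSpan hv]
  refine and_congr_right fun hz => ?_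
  rw [norm_add_smul_add_sq_of_inner_eq_zero (Submodule.inner_right_of_mem_orthogonal hu hz)]
  constructor <;> intro h <;> linarith

theorem stmt_0_general {κ : Type*} [Fintype κ] (hu : u ∈ vectorSpan ℝ (Set.range s))
    (hα : ∀ i, ⟪u, s i⟫ - α = t i) (hv : v ∈ affineSpan ℝ (Set.range s))
    (hβ : ∀ i, 2 * ⟪s i, v⟫ - β = ‖s i‖ ^ 2 - t i ^ 2)
    {w : κ → E} (hw : Orthonormal ℝ w)
    (hwspan : Submodule.span ℝ (Set.range w) = (vectorSpan ℝ (Set.range s))ᗮ) :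
    {p : ℝ × E | ∀ i, ‖s i - p.2‖ ^ 2 = (t i - p.1) ^ 2} =
      {p : ℝ × E | ∃ y : κ → ℝ, p.2 = v + p.1 • u + ∑ j, y j • w j ∧
        (∑ j, y j ^ 2) + (‖u‖ ^ 2 - 1) * p.1 ^ 2
          + 2 * (⟪u, v⟫ - α) * p.1 + ‖v‖ ^ 2 - β = 0} := by
  have norm_sq_sum (y : κ → ℝ) : ‖∑ j, y j • w j‖ ^ 2 = ∑ j, y j ^ 2 := by
    simpa using hw.orthogonalFamily.norm_sum y Finset.univ
  ext ⟨b, x⟩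
  obtain ⟨z, rfl⟩ : ∃ z, x = v + b • u + z := ⟨x - (v + b • u), (add_sub_cancel _ _).symm⟩
  simp only [Set.mem_ofPred_eq, forall_norm_sub_sq_eq_sq_iff hu hα hv hβ, ← hwspan,
    Submodule.mem_span_range_iff_exists_fun, ← norm_sq_sum, add_right_inj]
  constructor
  · rintro ⟨⟨y, rfl⟩, h⟩
    exact ⟨y, rfl, h⟩
  · rintro ⟨y, rfl, h⟩
    exact ⟨⟨y, rfl⟩, h⟩

end InnerProductSpace

theorem stmt_0 {n m : ℕ} [NeZero m] (hn : 1 ≤ n) (hm : m ≤ n + 1)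
    (s : Fin m → EuclideanSpace ℝ (Fin n)) (t : Fin m → ℝ)
    (hindep : AffineIndependent ℝ s)
    (u v : EuclideanSpace ℝ (Fin n)) (α β : ℝ)
    (hu : u ∈ Submodule.span ℝ (Set.range fun i => s i - s 0))
    (hα : ∀ i, ⟪u, s i⟫ - α = t i)
    (hv : v ∈ affineSpan ℝ (Set.range s))
    (hβ : ∀ i, 2 * ⟪s i, v⟫ - β = ‖s i‖ ^ 2 - t i ^ 2)
    {k : ℕ} (hk : k = n - (m - 1))
    (w : Fin k → EuclideanSpace ℝ (Fin n)) (hw : Orthonormal ℝ w)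
    (hwspan : Submodule.span ℝ (Set.range w)
      = (Submodule.span ℝ (Set.range fun i => s i - s 0))ᗮ)
    (X : Set (ℝ × EuclideanSpace ℝ (Fin n)))
    (hX : X = {p : ℝ × EuclideanSpace ℝ (Fin n) | ∀ i, ‖s i - p.2‖ ^ 2 = (t i - p.1) ^ 2}) :
    X = {p : ℝ × EuclideanSpace ℝ (Fin n) | ∃ y : Fin k → ℝ,
          p.2 = v + p.1 • u + ∑ j, y j • w j ∧
          (∑ j, y j ^ 2) + (‖u‖ ^ 2 - 1) * p.1 ^ 2
            + 2 * (⟪u, v⟫ - α) * p.1 + ‖v‖ ^ 2 - β = 0} := by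
  have hU := vectorSpan_range_eq_span_range_vsub_right ℝ s 0
  exact hX.trans (stmt_0_general (hU ▸ hu) hα hv hβ hw (hU ▸ hwspan))
end

section
/- Suppose m = 2 and s₁ ≠ s₂, and set d = ‖s₁ − s₂‖. Then u = ((t₁ − t₂)/d²)·(s₁ − s₂), so ‖u‖ = |t₁ − t₂|/d; moreover, for each sign σ ∈ {+1, −1}, the pair given by b = (t₁ + t₂ + σ·d)/2 and x = (s₁ + s₂ + σ·d·u)/2 belongs to 𝔛 (i.e., satisfies ‖sᵢ − x‖² = (tᵢ − b)² for i = 1,2). -/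
open scoped RealInnerProductSpace

/-!
The interpolation conditions give `⟪u, s 0 - s 1⟫ = t 0 - t 1`, and `u` is parallel to `s 0 - s 1`.
Hence `u` is its own orthogonal projection onto the line through `s 0 - s 1`, and equality holds in
the Cauchy–Schwarz inequality. With `v = s 0 - s 1` and `r = ± ‖v‖`, this equality turns the
expansion of `‖v - r • u‖ ^ 2` into the perfect square `(⟪u, v⟫ - r) ^ 2`, which is, up to
a factor `4`, the equation of the first satellite; exchanging the satellites gives the other
equation.
-/

section

variable {E ι : Type*} [NormedAddCommGroup E] [InnerProductSpace ℝ E]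

/-- The solution set of the squared global positioning equations: the pairs `(b, x)` of a clock
bias and a receiver position compatible with the satellite positions `s` and the pseudoranges
`t`. -/
def squaredPositioningSolutions (s : ι → E) (t : ι → ℝ) : Set (ℝ × E) :=
  {p | ∀ i, ‖s i - p.2‖ ^ 2 = (t i - p.1) ^ 2}

theorem span_range_sub_fin_two {R V : Type*} [Ring R] [AddCommGroup V] [Module R V]
    (s : Fin 2 → V) :
    Submodule.span R (Set.range fun i ↦ s i - s 0) = Submodule.span R {s 0 - s 1} := by
  have h_range : Set.range s = {s 0, s 1} := by
    ext; simp [eq_comm]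
  calc Submodule.span R (Set.range fun i ↦ s i - s 0)
      = vectorSpan R (Set.range s) := (vectorSpan_range_eq_span_range_vsub_right R s 0).symm
    _ = Submodule.span R {s 0 - s 1} := h_range ▸ vectorSpan_pair R (s 0) (s 1)

theorem eq_real_inner_div_norm_sq_smul_of_mem_span_singleton {u v : E}
    (hu : u ∈ Submodule.span ℝ {v}) : u = (⟪u, v⟫ / ‖v‖ ^ 2) • v := by
  rw [real_inner_comm]
  simpa [Submodule.starProjection_singleton] using
    (Submodule.starProjection_eq_self_iff.mpr hu).symm

theorem abs_real_inner_eq_norm_mul_norm_of_mem_span_singleton {u v : E}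
    (hu : u ∈ Submodule.span ℝ {v}) : |⟪u, v⟫| = ‖u‖ * ‖v‖ := by
  rw [real_inner_comm, mul_comm]
  exact ((norm_inner_eq_norm_tfae ℝ v u).out 0 3).mpr (Or.inr hu)

theorem norm_sub_smul_sq_of_mem_span_singleton {u v : E} {r : ℝ}
    (hu : u ∈ Submodule.span ℝ {v}) (hr : r ^ 2 = ‖v‖ ^ 2) :
    ‖v - r • u‖ ^ 2 = (⟪u, v⟫ - r) ^ 2 := by
  have h_inner_sq : ⟪u, v⟫ ^ 2 = ‖u‖ ^ 2 * ‖v‖ ^ 2 := by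
    rw [← sq_abs, abs_real_inner_eq_norm_mul_norm_of_mem_span_singleton hu, mul_pow]
  calc ‖v - r • u‖ ^ 2
      = ‖v‖ ^ 2 - 2 * r * ⟪u, v⟫ + r ^ 2 * ‖u‖ ^ 2 := by
        rw [norm_sub_sq_real, real_inner_smul_right, real_inner_comm, norm_smul, mul_pow,
          Real.norm_eq_abs, sq_abs]
        ring
    _ = r ^ 2 - 2 * r * ⟪u, v⟫ + ⟪u, v⟫ ^ 2 := by rw [h_inner_sq, hr]; ring
    _ = (⟪u, v⟫ - r) ^ 2 := by ring

theorem norm_sub_half_smul_add_sq {p q u : E} {a b r : ℝ}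
    (hu : u ∈ Submodule.span ℝ {p - q}) (h_inner : ⟪u, p - q⟫ = a - b)
    (hr : r ^ 2 = ‖p - q‖ ^ 2) :
    ‖p - (1 / 2 : ℝ) • (p + q + r • u)‖ ^ 2 = (a - (a + b + r) / 2) ^ 2 := by
  have h_half : p - (1 / 2 : ℝ) • (p + q + r • u) = (1 / 2 : ℝ) • (p - q - r • u) := by module
  rw [h_half, norm_smul, mul_pow, norm_sub_smul_sq_of_mem_span_singleton hu hr, h_inner,
    Real.norm_eq_abs, sq_abs]
  ring

theorem mem_squaredPositioningSolutions_fin_two {s : Fin 2 → E} {t : Fin 2 → ℝ} {u : E} {r : ℝ}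
    (hu : u ∈ Submodule.span ℝ {s 0 - s 1}) (h_inner : ⟪u, s 0 - s 1⟫ = t 0 - t 1)
    (hr : r ^ 2 = ‖s 0 - s 1‖ ^ 2) :
    ((t 0 + t 1 + r) / 2, (1 / 2 : ℝ) • (s 0 + s 1 + r • u)) ∈
      squaredPositioningSolutions s t := by
  have hu_swap : u ∈ Submodule.span ℝ {s 1 - s 0} := by
    rwa [← neg_sub, ← Set.neg_singleton, Submodule.span_neg]
  have h_inner_swap : ⟪u, s 1 - s 0⟫ = t 1 - t 0 := by
    rw [← neg_sub, inner_neg_right, h_inner, neg_sub]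
  refine Fin.forall_fin_two.mpr ⟨norm_sub_half_smul_add_sq hu h_inner hr, ?_⟩
  rw [add_comm (t 0), add_comm (s 0)]
  exact norm_sub_half_smul_add_sq hu_swap h_inner_swap (norm_sub_rev (s 0) (s 1) ▸ hr)

theorem stmt_1_general {s : Fin 2 → E} {t : Fin 2 → ℝ} (hne : s 0 ≠ s 1) {u : E} {α : ℝ}
    (hu : u ∈ Submodule.span ℝ (Set.range fun i ↦ s i - s 0))
    (hα : ∀ i, ⟪u, s i⟫ - α = t i) :
    u = ((t 0 - t 1) / ‖s 0 - s 1‖ ^ 2) • (s 0 - s 1) ∧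
    ‖u‖ = |t 0 - t 1| / ‖s 0 - s 1‖ ∧
    ∀ σ : ℝ, (σ = 1 ∨ σ = -1) →
      ((t 0 + t 1 + σ * ‖s 0 - s 1‖) / 2,
        (1 / 2 : ℝ) • (s 0 + s 1 + (σ * ‖s 0 - s 1‖) • u)) ∈
          squaredPositioningSolutions s t := by
  rw [span_range_sub_fin_two] at hu
  have h_inner : ⟪u, s 0 - s 1⟫ = t 0 - t 1 := by
    rw [inner_sub_right, ← hα 0, ← hα 1, sub_sub_sub_cancel_right]
  refine ⟨?_, ?_, fun σ hσ ↦ ?_⟩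
  · exact h_inner ▸ eq_real_inner_div_norm_sq_smul_of_mem_span_singleton hu
  · rw [eq_div_iff (norm_sub_eq_zero_iff.not.mpr hne), ← h_inner,
      abs_real_inner_eq_norm_mul_norm_of_mem_span_singleton hu]
  · apply mem_squaredPositioningSolutions_fin_two hu h_inner
    rw [mul_pow, sq_eq_one_iff.mpr hσ, one_mul]

end

theorem stmt_1 {n : ℕ} (hn : 1 ≤ n) (hm : 2 ≤ n + 1)
    (s : Fin 2 → EuclideanSpace ℝ (Fin n)) (t : Fin 2 → ℝ)
    (hindep : AffineIndependent ℝ s) (hne : s 0 ≠ s 1)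
    (u : EuclideanSpace ℝ (Fin n)) (α : ℝ)
    (hu : u ∈ Submodule.span ℝ (Set.range fun i => s i - s 0))
    (hα : ∀ i, ⟪u, s i⟫ - α = t i)
    (d : ℝ) (hd : d = ‖s 0 - s 1‖)
    (X : Set (ℝ × EuclideanSpace ℝ (Fin n)))
    (hX : X = {p : ℝ × EuclideanSpace ℝ (Fin n) | ∀ i, ‖s i - p.2‖ ^ 2 = (t i - p.1) ^ 2}) :
    u = ((t 0 - t 1) / d ^ 2) • (s 0 - s 1) ∧
    ‖u‖ = |t 0 - t 1| / d ∧
    ∀ σ : ℝ, (σ = 1 ∨ σ = -1) →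
      ((t 0 + t 1 + σ * d) / 2, ((1 : ℝ) / 2) • (s 0 + s 1 + (σ * d) • u)) ∈ X := by
  subst hd hX
  exact stmt_1_general hne hu hα
end

section
/- The polynomial identity (‖u‖² − 1)·b² + 2(⟨u,v⟩ − α)·b + ‖v‖² − β = 0 holds for all b ∈ ℝ if and only if m = 2 and |t₁ − t₂| = ‖s₁ − s₂‖. In that case: (1) 𝔛 = {(b, v + b·u) : b ∈ ℝ}; and (2) a pair (t,s) ∈ ℝ × ℝⁿ satisfies ‖s − x‖² = (t − b)² for all (b,x) ∈ 𝔛 if and only if s = v + t·u. In particular, in that case sᵢ = v + tᵢ·u for i = 1,2. -/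
/-!
Read `(b, x)` as an event at time `b` and place `x`, and let `Q b` be the quadratic polynomial. The
linear systems defining `u, α, v, β` say exactly that `Q b = ‖sᵢ - (v + b • u)‖² - (tᵢ - b)²` for
every `i`. Hence `Q = 0` means that every emission event `(tᵢ, sᵢ)` is lightlike separated from
every event of the line `x = v + b • u`. At `b = tᵢ` this puts `(tᵢ, sᵢ)` on that line, and the line
then has unit speed. Affinely independent points on a line are at most two, and a single one would
force `u = 0`. Conversely, if the two emission events are lightlike separated, the linear systems
make `x = v + b • u` the line through them. An event lightlike separated from two events of a line
of unit speed lies on that line; this determines `𝔛`, and, applied to `𝔛` itself, the pairs `(t, s)`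
of part (2).
-/

open Set
open scoped RealInnerProductSpace

section WorldLine

variable {E : Type*} [AddCommGroup E] [Module ℝ E] {u v : E}

/-- The world line of a particle of constant velocity `u` that is at `v` at time `0`, as a set of
events `(time, place)`; it is a light ray when `‖u‖ = 1`. -/
def worldLine (u v : E) : Set (ℝ × E) :=
  {p | p.2 = v + p.1 • u}

lemma sub_eq_smul_of_mem_worldLine {p q : ℝ × E} (hp : p ∈ worldLine u v)
    (hq : q ∈ worldLine u v) : p.2 - q.2 = (p.1 - q.1) • u := by
  rw [show p.2 = v + p.1 • u from hp, show q.2 = v + q.1 • u from hq, sub_smul]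
  abel

lemma worldLine_nontrivial : (worldLine u v).Nontrivial :=
  ⟨(0, v + (0 : ℝ) • u), rfl, (1, v + (1 : ℝ) • u), rfl, by simp [Prod.ext_iff]⟩

lemma collinear_range_of_mem_worldLine {ι : Type*} {s : ι → E} {t : ι → ℝ}
    (h : ∀ i, (t i, s i) ∈ worldLine u v) : Collinear ℝ (range s) := by
  refine (collinear_iff_exists_forall_eq_smul_vadd _).mpr ⟨v, u, ?_⟩
  rintro _ ⟨i, rfl⟩
  exact ⟨t i, (h i).trans (add_comm _ _)⟩

end WorldLine

section Minkowski

variable {E : Type*} [NormedAddCommGroup E]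

/-- Two events `(time, place)` are lightlike separated if the Minkowski quadratic form vanishes on
their difference. The equations of `𝔛` say that `(b, x)` is lightlike separated from every
`(tᵢ, sᵢ)`. -/
def LightlikeSeparated (p q : ℝ × E) : Prop :=
  ‖p.2 - q.2‖ ^ 2 = (p.1 - q.1) ^ 2

lemma lightlikeSeparated_comm {p q : ℝ × E} :
    LightlikeSeparated p q ↔ LightlikeSeparated q p := by
  rw [LightlikeSeparated, LightlikeSeparated, norm_sub_rev, sub_sq_comm]

lemma lightlikeSeparated_iff_abs_eq_norm {p q : ℝ × E} :
    LightlikeSeparated p q ↔ |p.1 - q.1| = ‖p.2 - q.2‖ := by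
  rw [LightlikeSeparated, eq_comm, sq_eq_sq_iff_abs_eq_abs, abs_norm]

lemma lightlikeSeparated_of_mem_worldLine [NormedSpace ℝ E] {u v : E} {p q : ℝ × E} (hu : ‖u‖ = 1)
    (hp : p ∈ worldLine u v) (hq : q ∈ worldLine u v) : LightlikeSeparated p q := by
  rw [LightlikeSeparated, sub_eq_smul_of_mem_worldLine hp hq, norm_smul, hu, mul_one,
    Real.norm_eq_abs, sq_abs]

variable [InnerProductSpace ℝ E] {u v : E} {p q : ℝ × E}

lemma lightlikeSeparated_iff_of_mem_worldLine (hu : ‖u‖ = 1) (hp : p ∈ worldLine u v) :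
    LightlikeSeparated p q ↔
      ‖q.2 - (v + q.1 • u)‖ ^ 2 = 2 * (p.1 - q.1) * ⟪u, q.2 - (v + q.1 • u)⟫ := by
  set w := q.2 - (v + q.1 • u) with hw
  have hpq : p.2 - q.2 = (p.1 - q.1) • u - w := by
    rw [show p.2 = v + p.1 • u from hp, hw, sub_smul]
    abel
  rw [LightlikeSeparated, hpq, norm_sub_sq_real, norm_smul, hu, mul_one, Real.norm_eq_abs, sq_abs,
    real_inner_smul_left]
  constructor <;> intro h <;> linarith

lemma forall_lightlikeSeparated_iff_mem_worldLine (hu : ‖u‖ = 1) {S : Set (ℝ × E)}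
    (hS : S.Nontrivial) (hSL : S ⊆ worldLine u v) :
    (∀ p ∈ S, LightlikeSeparated p q) ↔ q ∈ worldLine u v := by
  refine ⟨fun h ↦ ?_, fun hq p hp ↦ lightlikeSeparated_of_mem_worldLine hu (hSL hp) hq⟩
  obtain ⟨p, hp, p', hp', hne⟩ := hS
  have htime : p.1 - p'.1 ≠ 0 := by
    intro h0
    have hplace := sub_eq_smul_of_mem_worldLine (hSL hp) (hSL hp')
    rw [h0, zero_smul] at hplace
    exact hne (Prod.ext (sub_eq_zero.mp h0) (sub_eq_zero.mp hplace))
  have hsep := (lightlikeSeparated_iff_of_mem_worldLine hu (hSL hp)).mp (h p hp)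
  have hsep' := (lightlikeSeparated_iff_of_mem_worldLine hu (hSL hp')).mp (h p' hp')
  have hinner : ⟪u, q.2 - (v + q.1 • u)⟫ = 0 :=
    (mul_eq_zero_iff_left htime).mp (by linarith)
  rw [hinner, mul_zero, sq_eq_zero_iff, norm_eq_zero] at hsep
  exact sub_eq_zero.mp hsep

lemma forall_mem_worldLine_lightlikeSeparated_iff (hu : ‖u‖ = 1) :
    (∀ p ∈ worldLine u v, LightlikeSeparated q p) ↔ q ∈ worldLine u v := by
  simp only [lightlikeSeparated_comm (p := q)]
  exact forall_lightlikeSeparated_iff_mem_worldLine hu worldLine_nontrivial subset_rfl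

lemma setOf_lightlikeSeparated_eq_worldLine {ι : Type*} [Nontrivial ι] {s : ι → E} {t : ι → ℝ}
    (hu : ‖u‖ = 1) (hs : s.Injective) (h : ∀ i, (t i, s i) ∈ worldLine u v) :
    {q | ∀ i, LightlikeSeparated (t i, s i) q} = worldLine u v := by
  ext q
  have hnontrivial : (range fun i ↦ (t i, s i)).Nontrivial := by
    rw [← image_univ]
    exact nontrivial_univ.image fun i j hij ↦ hs (congrArg Prod.snd hij)
  rw [← forall_lightlikeSeparated_iff_mem_worldLine hu hnontrivial (range_subset_iff.mpr h),
    forall_mem_range]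
  rfl

end Minkowski

section AffineSpace

variable {k V P ι : Type*} [AddCommGroup V] [AddTorsor V P] {s : ι → P}

lemma nontrivial_of_mem_vectorSpan_range [Ring k] [Module k V] {w : V}
    (hw : w ∈ vectorSpan k (range s)) (hw0 : w ≠ 0) : Nontrivial ι := by
  by_contra hι
  rw [not_nontrivial_iff_subsingleton] at hι
  rw [vectorSpan_of_subsingleton k (subsingleton_range s), Submodule.mem_bot] at hw
  exact hw0 hw

lemma card_eq_two_of_affineIndependent_of_collinear [DivisionRing k] [Module k V] [Nontrivial ι]
    (hs : AffineIndependent k s) (hcol : Collinear k (range s)) : Nat.card ι = 2 := by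
  obtain ⟨i, j, hij⟩ := exists_pair_ne ι
  refine Nat.card_eq_two_iff.mpr ⟨i, j, hij, eq_univ_of_forall fun l ↦ ?_⟩
  by_contra hl
  simp only [mem_insert_iff, mem_singleton_iff, not_or] at hl
  have hinj : Function.Injective ![i, j, l] := by
    intro a b hab
    fin_cases a <;> fin_cases b <;> simp_all
  exact affineIndependent_iff_not_collinear.mp (hs.comp_embedding ⟨_, hinj⟩)
    (hcol.subset (range_comp_subset_range _ s))

end AffineSpace

section Satellites

variable {E : Type*} [NormedAddCommGroup E] [InnerProductSpace ℝ E] {u v : E} {α β : ℝ}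

lemma quadratic_eq_norm_sub_sq_sub_sq {s : E} {t : ℝ} (hα : ⟪u, s⟫ - α = t)
    (hβ : 2 * ⟪s, v⟫ - β = ‖s‖ ^ 2 - t ^ 2) (b : ℝ) :
    (‖u‖ ^ 2 - 1) * b ^ 2 + 2 * (⟪u, v⟫ - α) * b + ‖v‖ ^ 2 - β =
      ‖s - (v + b • u)‖ ^ 2 - (t - b) ^ 2 := by
  rw [norm_sub_sq_real, norm_add_sq_real, inner_add_right, real_inner_smul_right,
    real_inner_smul_right, norm_smul, mul_pow, Real.norm_eq_abs, sq_abs, real_inner_comm u s,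
    real_inner_comm u v]
  linear_combination hβ + 2 * b * hα

lemma forall_quadratic_eq_zero_iff {s : E} {t : ℝ} (hα : ⟪u, s⟫ - α = t)
    (hβ : 2 * ⟪s, v⟫ - β = ‖s‖ ^ 2 - t ^ 2) :
    (∀ b : ℝ, (‖u‖ ^ 2 - 1) * b ^ 2 + 2 * (⟪u, v⟫ - α) * b + ‖v‖ ^ 2 - β = 0) ↔
      ‖u‖ = 1 ∧ (t, s) ∈ worldLine u v := by
  simp only [quadratic_eq_norm_sub_sq_sub_sq hα hβ, sub_eq_zero]
  refine ⟨fun h ↦ ?_, fun ⟨hu, hs⟩ b ↦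
    lightlikeSeparated_of_mem_worldLine (q := (b, v + b • u)) hu hs rfl⟩
  have hs : s = v + t • u := by simpa [sub_eq_zero] using h t
  have hnext : s - (v + (t + 1) • u) = -u := by
    rw [hs, add_smul, one_smul]
    abel
  have hu : ‖u‖ ^ 2 = 1 := by simpa [hnext] using h (t + 1)
  exact ⟨(pow_eq_one_iff_of_nonneg (norm_nonneg u) two_ne_zero).mp hu, hs⟩

lemma norm_eq_one_and_eq_inner_smul {d : E} (hd : d ≠ 0) (hu : u ∈ ℝ ∙ d)
    (h : |⟪u, d⟫| = ‖d‖) : ‖u‖ = 1 ∧ d = ⟪u, d⟫ • u := by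
  obtain ⟨c, rfl⟩ := Submodule.mem_span_singleton.mp hu
  have hd' : ‖d‖ ≠ 0 := norm_ne_zero_iff.mpr hd
  rw [real_inner_smul_left, real_inner_self_eq_norm_sq, abs_mul, abs_pow, abs_norm] at h
  have hc : |c| * ‖d‖ = 1 := mul_right_cancel₀ hd' (by linear_combination h)
  refine ⟨by rw [norm_smul, Real.norm_eq_abs, hc], ?_⟩
  rw [real_inner_smul_left, real_inner_self_eq_norm_sq, smul_smul,
    show c * ‖d‖ ^ 2 * c = (|c| * ‖d‖) ^ 2 by rw [mul_pow, sq_abs]; ring, hc, one_pow, one_smul]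

lemma mem_worldLine_of_norm_sub_sq_sub_sq_eq {x y : E} {a b : ℝ} (hu : ‖u‖ = 1) (hab : a ≠ b)
    (hxy : y - x = (b - a) • u) (hv : v ∈ line[ℝ, x, y])
    (h : ‖x - v‖ ^ 2 - a ^ 2 = ‖y - v‖ ^ 2 - b ^ 2) : (a, x) ∈ worldLine u v := by
  obtain ⟨k, hk⟩ := mem_affineSpan_pair_iff_exists_lineMap_eq.mp hv
  obtain ⟨r, rfl⟩ : ∃ r : ℝ, x = v + r • u := by
    refine ⟨-(k * (b - a)), ?_⟩
    rw [← hk, AffineMap.lineMap_apply, vsub_eq_sub, hxy, vadd_eq_add, smul_smul, neg_smul]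
    abel
  obtain rfl : y = v + (b - a + r) • u := by
    rw [sub_eq_iff_eq_add.mp hxy, add_smul]
    abel
  simp only [add_sub_cancel_left, norm_smul, hu, mul_one, Real.norm_eq_abs, sq_abs] at h
  have hr : r = a := mul_left_cancel₀ (sub_ne_zero.mpr hab) (by linear_combination h / 2)
  rw [hr]
  rfl

variable {ι : Type*} {s : ι → E} {t : ι → ℝ}

lemma norm_eq_one_and_mem_worldLine_of_card_eq_two (i : ι) (hcard : Nat.card ι = 2)
    (hs : s.Injective) (hu : u ∈ vectorSpan ℝ (range s))
    (hα : ∀ i, ⟪u, s i⟫ - α = t i) (hv : v ∈ affineSpan ℝ (range s))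
    (hβ : ∀ i, 2 * ⟪s i, v⟫ - β = ‖s i‖ ^ 2 - t i ^ 2)
    (ht : ∀ i j, |t i - t j| = ‖s i - s j‖) :
    ‖u‖ = 1 ∧ (t i, s i) ∈ worldLine u v := by
  obtain ⟨j, hji, huniq⟩ := (Nat.card_eq_two_iff' i).mp hcard
  have huniv : {i, j} = univ := eq_univ_of_forall fun l ↦ or_iff_not_imp_left.mpr (huniq l)
  have hd : s j - s i ≠ 0 := sub_ne_zero.mpr (hs.ne hji)
  have hrange : range s = {s i, s j} := by rw [← image_univ, ← huniv, image_pair]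
  have hinner : ⟪u, s j - s i⟫ = t j - t i := by
    rw [inner_sub_right]
    linarith [hα i, hα j]
  rw [hrange] at hu hv
  rw [vectorSpan_pair_rev, vsub_eq_sub] at hu
  obtain ⟨hu1, hsmul⟩ := norm_eq_one_and_eq_inner_smul hd hu (by rw [hinner, ht])
  rw [hinner] at hsmul
  have htij : t i ≠ t j := by
    intro h
    rw [h, sub_self, zero_smul] at hsmul
    exact hd hsmul
  have hpower (k : ι) : ‖s k - v‖ ^ 2 - t k ^ 2 = ‖v‖ ^ 2 - β := by
    rw [norm_sub_sq_real]
    linarith [hβ k]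
  exact ⟨hu1, mem_worldLine_of_norm_sub_sq_sub_sq_eq hu1 htij hsmul hv
    ((hpower i).trans (hpower j).symm)⟩

end Satellites

theorem stmt_2_general {ι E : Type*} [NormedAddCommGroup E] [InnerProductSpace ℝ E]
    {s : ι → E} {t : ι → ℝ} (hindep : AffineIndependent ℝ s) {u v : E} {α β : ℝ}
    (hu : u ∈ vectorSpan ℝ (range s)) (hα : ∀ i, ⟪u, s i⟫ - α = t i)
    (hv : v ∈ affineSpan ℝ (range s)) (hβ : ∀ i, 2 * ⟪s i, v⟫ - β = ‖s i‖ ^ 2 - t i ^ 2)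
    {X : Set (ℝ × E)} (hX : X = {p | ∀ i, ‖s i - p.2‖ ^ 2 = (t i - p.1) ^ 2}) :
    ((∀ b : ℝ, (‖u‖ ^ 2 - 1) * b ^ 2 + 2 * (⟪u, v⟫ - α) * b + ‖v‖ ^ 2 - β = 0) ↔
      Nat.card ι = 2 ∧ ∀ i j, |t i - t j| = ‖s i - s j‖) ∧
    ((∀ b : ℝ, (‖u‖ ^ 2 - 1) * b ^ 2 + 2 * (⟪u, v⟫ - α) * b + ‖v‖ ^ 2 - β = 0) →
      X = {p | p.2 = v + p.1 • u} ∧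
      (∀ (τ : ℝ) (σ : E), (∀ p ∈ X, ‖σ - p.2‖ ^ 2 = (τ - p.1) ^ 2) ↔ σ = v + τ • u) ∧
      ∀ i, s i = v + t i • u) := by
  obtain ⟨_, i₀, rfl⟩ := (affineSpan_nonempty ℝ).mp ⟨v, hv⟩
  have hQ (i : ι) := forall_quadratic_eq_zero_iff (hα i) (hβ i)
  have hray (h : ‖u‖ = 1 ∧ (t i₀, s i₀) ∈ worldLine u v) :
      Nontrivial ι ∧ ∀ i, (t i, s i) ∈ worldLine u v :=
    ⟨nontrivial_of_mem_vectorSpan_range hu (norm_ne_zero_iff.mp (h.1 ▸ one_ne_zero)),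
      fun i ↦ ((hQ i).mp ((hQ i₀).mpr h)).2⟩
  rw [hQ i₀]
  refine ⟨⟨fun h ↦ ?_, fun ⟨hcard, ht⟩ ↦ ?_⟩, fun h ↦ ?_⟩
  · obtain ⟨_, hmem⟩ := hray h
    exact ⟨card_eq_two_of_affineIndependent_of_collinear hindep
        (collinear_range_of_mem_worldLine hmem),
      fun i j ↦ lightlikeSeparated_iff_abs_eq_norm.mp
        (lightlikeSeparated_of_mem_worldLine h.1 (hmem i) (hmem j))⟩
  · exact norm_eq_one_and_mem_worldLine_of_card_eq_two i₀ hcard hindep.injective hu hα hv hβ ht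
  · obtain ⟨_, hmem⟩ := hray h
    obtain rfl : X = worldLine u v :=
      hX.trans (setOf_lightlikeSeparated_eq_worldLine h.1 hindep.injective hmem)
    exact ⟨rfl, fun τ σ ↦ forall_mem_worldLine_lightlikeSeparated_iff (q := (τ, σ)) h.1, hmem⟩

theorem stmt_2 {n m : ℕ} [NeZero m] (hn : 1 ≤ n) (hm : m ≤ n + 1)
    (s : Fin m → EuclideanSpace ℝ (Fin n)) (t : Fin m → ℝ)
    (hindep : AffineIndependent ℝ s)
    (u v : EuclideanSpace ℝ (Fin n)) (α β : ℝ)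
    (hu : u ∈ Submodule.span ℝ (Set.range fun i => s i - s 0))
    (hα : ∀ i, ⟪u, s i⟫ - α = t i)
    (hv : v ∈ affineSpan ℝ (Set.range s))
    (hβ : ∀ i, 2 * ⟪s i, v⟫ - β = ‖s i‖ ^ 2 - t i ^ 2)
    (X : Set (ℝ × EuclideanSpace ℝ (Fin n)))
    (hX : X = {p : ℝ × EuclideanSpace ℝ (Fin n) | ∀ i, ‖s i - p.2‖ ^ 2 = (t i - p.1) ^ 2}) :
    ((∀ b : ℝ, (‖u‖ ^ 2 - 1) * b ^ 2 + 2 * (⟪u, v⟫ - α) * b + ‖v‖ ^ 2 - β = 0)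
      ↔ (m = 2 ∧ ∀ i j : Fin m, |t i - t j| = ‖s i - s j‖)) ∧
    ((∀ b : ℝ, (‖u‖ ^ 2 - 1) * b ^ 2 + 2 * (⟪u, v⟫ - α) * b + ‖v‖ ^ 2 - β = 0) →
      (X = {p : ℝ × EuclideanSpace ℝ (Fin n) | p.2 = v + p.1 • u} ∧
       (∀ (τ : ℝ) (σ : EuclideanSpace ℝ (Fin n)),
          (∀ p ∈ X, ‖σ - p.2‖ ^ 2 = (τ - p.1) ^ 2) ↔ σ = v + τ • u) ∧
       ∀ i, s i = v + t i • u)) := by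
  simpa only [Nat.card_fin] using stmt_2_general hindep
    ((vectorSpan_range_eq_span_range_vsub_right ℝ s 0).symm ▸ hu) hα hv hβ hX
end

section
/- If 𝔛 has at least two elements, then 𝒮 = 𝒮′; that is, a pair (t,s) ∈ ℝ × ℝⁿ satisfies ‖s − x‖² = (t − b)² for all (b,x) ∈ 𝔛 if and only if s lies in the affine span of s₁,…,s_m, t = ⟨u,s⟩ − α, and h̃(s) = 0. -/
open scoped RealInnerProductSpace

/-!
Let `U` be the direction of the affine span `v + U` of the emitters. The solutions `(b, x)` are the
points `(b, v + b u + w)` with `w ⊥ U` and `‖w‖² = q(b)`, where `q` is a quadratic polynomial. If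
`(τ, y)` is lightlike separated from all of them, then comparing `w` with `-w` shows that
`⟪y - v, w⟫ = 0` and that a certain affine function of `b` vanishes at every clock bias `b` that
occurs. A nontrivial solution set contains two different biases, so this affine function is zero,
which gives `τ = ⟪u, y⟫ - α` and `h̃(y) = 0`. If `q` is positive somewhere, then `w` can have any
direction in `Uᗮ`, hence `y - v ∈ Uᗮᗮ = U`. Otherwise `q ≤ 0` has two zeros, hence `q = 0` and
`‖u‖ = 1`. Now `(τ, y - v)` is lightlike separated from two points of the lightlike line `ℝ (1, u)`,
which forces it to lie on that line.
-/

theorem leadingCoeff_eq_zero_of_quadratic_nonpos {K : Type*} [Field K] [LinearOrder K]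
    [IsStrictOrderedRing K] {a b c x y : K} (h : ∀ z, a * z ^ 2 + b * z + c ≤ 0) (hxy : x ≠ y)
    (hx : a * x ^ 2 + b * x + c = 0) (hy : a * y ^ 2 + b * y + c = 0) : a = 0 := by
  have hpos : 0 < (x - y) ^ 2 := sq_pos_of_ne_zero (sub_ne_zero.mpr hxy)
  have outer : a * (x - y) ^ 2 ≤ 0 := by
    linear_combination (h (2 * x - y) + hy - 2 * hx) / 2
  have inner : 0 ≤ a * (x - y) ^ 2 := by
    linear_combination 4 * h ((x + y) / 2) - 2 * hx - 2 * hy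
  exact (mul_eq_zero_iff_right hpos.ne').mp (outer.antisymm inner)

section NormedSpace

variable {E : Type*} [NormedAddCommGroup E] [NormedSpace ℝ E]

theorem exists_norm_smul_sq_eq {w : E} (hw : w ≠ 0) {r : ℝ} (hr : 0 ≤ r) :
    ∃ c : ℝ, ‖c • w‖ ^ 2 = r := by
  refine ⟨√r / ‖w‖, ?_⟩
  rw [norm_smul, Real.norm_of_nonneg (by positivity), div_mul_cancel₀ _ (norm_ne_zero_iff.mpr hw),
    Real.sq_sqrt hr]

end NormedSpace

section NullPolar

variable {E : Type*} [SeminormedAddCommGroup E]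

/-- The points of `ℝ × E` at zero Lorentz distance `‖y - x‖² - (τ - b)²` from every point of `T`.
If `T` consists of the pairs `(tᵢ, sᵢ)`, this is the solution set `𝔛`, and the null polar of `𝔛`
is `𝒮`. -/
def nullPolar (T : Set (ℝ × E)) : Set (ℝ × E) :=
  {p | ∀ q ∈ T, ‖q.2 - p.2‖ ^ 2 = (q.1 - p.1) ^ 2}

theorem nullPolar_anti {T T' : Set (ℝ × E)} (h : T ⊆ T') : nullPolar T' ⊆ nullPolar T :=
  fun _ hp q hq ↦ hp q (h hq)

theorem mem_nullPolar_iff {T : Set (ℝ × E)} {q : ℝ × E} :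
    q ∈ nullPolar T ↔ ∀ p ∈ T, ‖q.2 - p.2‖ ^ 2 = (q.1 - p.1) ^ 2 := by
  simp only [nullPolar, Set.mem_ofPred_eq, norm_sub_rev q.2, sub_sq_comm q.1]

theorem subset_nullPolar_comm {T T' : Set (ℝ × E)} : T ⊆ nullPolar T' ↔ T' ⊆ nullPolar T := by
  simp only [Set.subset_def, mem_nullPolar_iff (T := T)]
  exact forall₂_comm

end NullPolar

section InnerProductSpace

variable {E : Type*} [NormedAddCommGroup E] [InnerProductSpace ℝ E]

theorem inner_eq_of_mem_affineSpan {s : Set E} {w : E} {k : ℝ} (h : ∀ y ∈ s, ⟪w, y⟫ = k) {y : E}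
    (hy : y ∈ affineSpan ℝ s) : ⟪w, y⟫ = k :=
  AffineMap.eqOn_affineSpan (f := (innerSL ℝ w).toLinearMap.toAffineMap)
    (g := AffineMap.const ℝ E k) h hy

theorem eq_smul_of_norm_sub_smul_sq_eq {u z : E} (hu : ‖u‖ = 1) {a b τ : ℝ} (hab : a ≠ b)
    (ha : ‖z - a • u‖ ^ 2 = (τ - a) ^ 2) (hb : ‖z - b • u‖ ^ 2 = (τ - b) ^ 2) : z = τ • u := by
  have expand (c : ℝ) : ‖z - c • u‖ ^ 2 = ‖z‖ ^ 2 - 2 * c * ⟪z, u⟫ + c ^ 2 := by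
    rw [norm_sub_sq_real, real_inner_smul_right, norm_smul, hu, Real.norm_eq_abs, mul_one, sq_abs]
    ring
  have hinner : ⟪z, u⟫ = τ := by
    apply mul_left_cancel₀ (sub_ne_zero.mpr hab)
    linarith [expand a, expand b]
  have hnorm : ‖z - τ • u‖ ^ 2 = 0 := by
    rw [expand τ]
    linear_combination ha - expand a + 2 * (a - τ) * hinner
  simpa [sub_eq_zero] using hnorm

/-- The squared distance from `v + b u` to the receiver positions with clock bias `b`. -/
def radiusSq (u v : E) (α β b : ℝ) : ℝ :=
  (1 - ‖u‖ ^ 2) * b ^ 2 + 2 * (α - ⟪u, v⟫) * b + (β - ‖v‖ ^ 2)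

/-- The parametric form of the solution set `𝔛`, for emitters with affine span `A`: the pairs
`(b, v + b u + w)` with `w` orthogonal to `A` and `‖w‖² = radiusSq u v α β b`. -/
def receiverQuadric (A : AffineSubspace ℝ E) (u v : E) (α β : ℝ) : Set (ℝ × E) :=
  {p | p.2 - (v + p.1 • u) ∈ A.directionᗮ ∧
    ‖p.2 - (v + p.1 • u)‖ ^ 2 = radiusSq u v α β p.1}

/-- The set `𝒮′`, for emitters with affine span `A`. The quadratic equation is stated in the form
in which it defines `v` and `β`; see `mem_emitterQuadric_iff` for the equation `h̃ = 0`. -/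
def emitterQuadric (A : AffineSubspace ℝ E) (u v : E) (α β : ℝ) : Set (ℝ × E) :=
  {q | q.2 ∈ A ∧ ⟪u, q.2⟫ - α = q.1 ∧ 2 * ⟪q.2, v⟫ - β = ‖q.2‖ ^ 2 - q.1 ^ 2}

variable {A : AffineSubspace ℝ E} {u v w y : E} {α β τ b : ℝ}

theorem mem_emitterQuadric_iff {q : ℝ × E} : q ∈ emitterQuadric A u v α β ↔
    q.2 ∈ A ∧ q.1 = ⟪u, q.2⟫ - α ∧
      ‖q.2‖ ^ 2 - ⟪u, q.2⟫ ^ 2 + 2 * ⟪α • u - v, q.2⟫ + β - α ^ 2 = 0 := by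
  simp only [emitterQuadric, Set.mem_ofPred_eq, eq_comm (b := q.1)]
  refine and_congr_right fun _ ↦ and_congr_right fun hτ ↦ ?_
  rw [hτ, inner_sub_left, real_inner_smul_left, real_inner_comm]
  constructor <;> intro h <;> linear_combination -h

theorem mk_mem_receiverQuadric_iff : (b, v + b • u + w) ∈ receiverQuadric A u v α β ↔
    w ∈ A.directionᗮ ∧ ‖w‖ ^ 2 = radiusSq u v α β b := by
  simp only [receiverQuadric, Set.mem_ofPred_eq, add_sub_cancel_left]

theorem norm_sub_sq_sub_sq_eq_add_radiusSq (u v w y : E) (α β τ b : ℝ) :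
    ‖y - (v + b • u + w)‖ ^ 2 - (τ - b) ^ 2 =
      (‖y‖ ^ 2 - τ ^ 2 - (2 * ⟪y, v⟫ - β)) + 2 * b * (τ - (⟪u, y⟫ - α)) +
        (‖w‖ ^ 2 - radiusSq u v α β b) + 2 * (b * ⟪u, w⟫ - ⟪y - v, w⟫) := by
  simp only [radiusSq, norm_sub_sq_real, norm_add_sq_real, norm_smul, mul_pow, Real.norm_eq_abs,
    sq_abs, inner_add_left, inner_add_right, inner_sub_left, real_inner_smul_left,
    real_inner_smul_right, real_inner_comm u v, real_inner_comm u y]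
  ring

theorem norm_sub_sq_sub_sq_of_mem_emitterQuadric {q : ℝ × E} (hq : q ∈ emitterQuadric A u v α β)
    (w : E) (b : ℝ) : ‖q.2 - (v + b • u + w)‖ ^ 2 - (q.1 - b) ^ 2 =
      (‖w‖ ^ 2 - radiusSq u v α β b) + 2 * (b * ⟪u, w⟫ - ⟪q.2 - v, w⟫) := by
  obtain ⟨-, hτ, hβ⟩ := hq
  rw [norm_sub_sq_sub_sq_eq_add_radiusSq u v w q.2 α β, hτ, hβ]
  ring

theorem receiverQuadric_subset_nullPolar_emitterQuadric (hu : u ∈ A.direction) (hv : v ∈ A) :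
    receiverQuadric A u v α β ⊆ nullPolar (emitterQuadric A u v α β) := by
  rintro p ⟨hw, hnorm⟩ q hq
  have hz : q.2 - v ∈ A.direction := A.vsub_mem_direction hq.1 hv
  have hsep := norm_sub_sq_sub_sq_of_mem_emitterQuadric hq (p.2 - (v + p.1 • u)) p.1
  rw [hnorm, Submodule.inner_right_of_mem_orthogonal hu hw,
    Submodule.inner_right_of_mem_orthogonal hz hw, add_sub_cancel] at hsep
  linarith

theorem nullPolar_subset_receiverQuadric {T : Set (ℝ × E)} (hT : T ⊆ emitterQuadric A u v α β)
    (hA : affineSpan ℝ (Prod.snd '' T) = A) (hu : u ∈ A.direction) (hv : v ∈ A) :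
    nullPolar T ⊆ receiverQuadric A u v α β := by
  rintro ⟨b, x⟩ hp
  obtain ⟨w, rfl⟩ : ∃ w, x = v + b • u + w := ⟨x - (v + b • u), by abel⟩
  -- The equations of the points of `T` differ only in `⟪w, y⟫`, which is therefore constant on `A`.
  have hconst (y : E) (hy : y ∈ A) :
      ⟪w, y⟫ = (‖w‖ ^ 2 - radiusSq u v α β b) / 2 + b * ⟪u, w⟫ + ⟪v, w⟫ := by
    refine inner_eq_of_mem_affineSpan ?_ (hA ▸ hy)
    rintro _ ⟨q, hq, rfl⟩
    have hsep := norm_sub_sq_sub_sq_of_mem_emitterQuadric (hT hq) w b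
    rw [inner_sub_left, real_inner_comm w q.2] at hsep
    linarith [hp q hq]
  have hw : w ∈ A.directionᗮ := by
    refine (Submodule.mem_orthogonal' _ _).mpr fun z hz ↦ ?_
    have hvz := hconst (z + v) (A.vadd_mem_of_mem_direction hz hv)
    rw [inner_add_right, hconst v hv] at hvz
    linarith
  have hvw := hconst v hv
  rw [Submodule.inner_right_of_mem_orthogonal hu hw, real_inner_comm] at hvw
  exact mk_mem_receiverQuadric_iff.mpr ⟨hw, by linarith⟩

theorem nullPolar_eq_receiverQuadric {T : Set (ℝ × E)} (hT : T ⊆ emitterQuadric A u v α β)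
    (hA : affineSpan ℝ (Prod.snd '' T) = A) (hu : u ∈ A.direction) (hv : v ∈ A) :
    nullPolar T = receiverQuadric A u v α β :=
  (nullPolar_subset_receiverQuadric hT hA hu hv).antisymm
    ((receiverQuadric_subset_nullPolar_emitterQuadric hu hv).trans (nullPolar_anti hT))

theorem exists_smul_mem_receiverQuadric (hw : w ∈ A.directionᗮ) (hw₀ : w ≠ 0)
    (hb : 0 ≤ radiusSq u v α β b) :
    ∃ c : ℝ, (b, v + b • u + c • w) ∈ receiverQuadric A u v α β := by
  obtain ⟨c, hc⟩ := exists_norm_smul_sq_eq hw₀ hb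
  exact ⟨c, mk_mem_receiverQuadric_iff.mpr ⟨Submodule.smul_mem _ c hw, hc⟩⟩

theorem radiusSq_nonneg_of_mem_receiverQuadric {p : ℝ × E}
    (hp : p ∈ receiverQuadric A u v α β) : 0 ≤ radiusSq u v α β p.1 :=
  hp.2 ▸ sq_nonneg _

theorem eq_mk_of_mem_receiverQuadric_of_radiusSq_eq_zero {p : ℝ × E}
    (hp : p ∈ receiverQuadric A u v α β) (h₀ : radiusSq u v α β p.1 = 0) :
    p = (p.1, v + p.1 • u) := by
  have hnorm := hp.2
  rw [h₀, sq_eq_zero_iff, norm_eq_zero, sub_eq_zero] at hnorm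
  exact Prod.ext rfl hnorm

theorem continuous_radiusSq (u v : E) (α β : ℝ) : Continuous (radiusSq u v α β) := by
  unfold radiusSq
  fun_prop

theorem nontrivial_fst_image_receiverQuadric (h : (receiverQuadric A u v α β).Nontrivial) :
    (Prod.fst '' receiverQuadric A u v α β).Nontrivial := by
  obtain ⟨p, hp, p', hp', hne⟩ := h
  by_cases hfst : p.1 = p'.1
  · have hpos : 0 < radiusSq u v α β p.1 := by
      refine (radiusSq_nonneg_of_mem_receiverQuadric hp).lt_of_ne' fun h₀ ↦ hne ?_
      rw [eq_mk_of_mem_receiverQuadric_of_radiusSq_eq_zero hp h₀,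
        eq_mk_of_mem_receiverQuadric_of_radiusSq_eq_zero hp' (hfst ▸ h₀), hfst]
    have hw₀ : p.2 - (v + p.1 • u) ≠ 0 := by
      intro hw₀
      rw [← hp.2, hw₀] at hpos
      simp at hpos
    have hpos_near : ∀ᶠ b in nhds p.1, 0 < radiusSq u v α β b :=
      (continuous_radiusSq u v α β).continuousAt.eventually_const_lt hpos
    obtain ⟨b, hb, hbne⟩ : ∃ b, 0 < radiusSq u v α β b ∧ b ≠ p.1 :=
      ((hpos_near.filter_mono nhdsWithin_le_nhds).and
        (eventually_mem_nhdsWithin (s := {p.1}ᶜ))).exists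
    obtain ⟨c, hc⟩ := exists_smul_mem_receiverQuadric hp.1 hw₀ hb.le
    exact ⟨b, Set.mem_image_of_mem _ hc, p.1, Set.mem_image_of_mem _ hp, hbne⟩
  · exact ⟨p.1, Set.mem_image_of_mem _ hp, p'.1, Set.mem_image_of_mem _ hp', hfst⟩

theorem affine_eq_zero_and_inner_eq_zero_of_mem_nullPolar (hu : u ∈ A.direction)
    (hq : (τ, y) ∈ nullPolar (receiverQuadric A u v α β))
    (hp : (b, v + b • u + w) ∈ receiverQuadric A u v α β) :
    (‖y‖ ^ 2 - τ ^ 2 - (2 * ⟪y, v⟫ - β)) + 2 * b * (τ - (⟪u, y⟫ - α)) = 0 ∧ ⟪y - v, w⟫ = 0 := by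
  have separation {w' : E} (hp' : (b, v + b • u + w') ∈ receiverQuadric A u v α β) :
      (‖y‖ ^ 2 - τ ^ 2 - (2 * ⟪y, v⟫ - β)) + 2 * b * (τ - (⟪u, y⟫ - α)) = 2 * ⟪y - v, w'⟫ := by
    obtain ⟨hw', hnorm⟩ := mk_mem_receiverQuadric_iff.mp hp'
    have hsep := norm_sub_sq_sub_sq_eq_add_radiusSq u v w' y α β τ b
    rw [hnorm, Submodule.inner_right_of_mem_orthogonal hu hw', norm_sub_rev] at hsep
    linear_combination -hsep + hq _ hp'
  have hneg : (b, v + b • u + -w) ∈ receiverQuadric A u v α β := by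
    rwa [mk_mem_receiverQuadric_iff, neg_mem_iff, norm_neg, ← mk_mem_receiverQuadric_iff]
  have hsep := separation hp
  have hsep_neg := separation hneg
  rw [inner_neg_right] at hsep_neg
  constructor <;> linarith

theorem emitter_equations_of_mem_nullPolar (hu : u ∈ A.direction)
    (h : (receiverQuadric A u v α β).Nontrivial)
    (hq : (τ, y) ∈ nullPolar (receiverQuadric A u v α β)) :
    ⟪u, y⟫ - α = τ ∧ 2 * ⟪y, v⟫ - β = ‖y‖ ^ 2 - τ ^ 2 := by
  have affine_eq_zero {p : ℝ × E} (hp : p ∈ receiverQuadric A u v α β) :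
      (‖y‖ ^ 2 - τ ^ 2 - (2 * ⟪y, v⟫ - β)) + 2 * p.1 * (τ - (⟪u, y⟫ - α)) = 0 := by
    refine (affine_eq_zero_and_inner_eq_zero_of_mem_nullPolar hu hq
      (w := p.2 - (v + p.1 • u)) ?_).1
    rwa [add_sub_cancel]
  obtain ⟨_, ⟨p, hp, rfl⟩, _, ⟨p', hp', rfl⟩, hne⟩ := nontrivial_fst_image_receiverQuadric h
  have hτ : ⟪u, y⟫ - α = τ := by
    apply mul_left_cancel₀ (sub_ne_zero.mpr hne)
    linarith [affine_eq_zero hp, affine_eq_zero hp']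
  refine ⟨hτ, ?_⟩
  have hzero := affine_eq_zero hp
  rw [hτ] at hzero
  linarith

theorem sub_mem_direction_of_radiusSq_pos [A.direction.HasOrthogonalProjection]
    (hu : u ∈ A.direction) (hb : 0 < radiusSq u v α β b)
    (hq : (τ, y) ∈ nullPolar (receiverQuadric A u v α β)) : y - v ∈ A.direction := by
  rw [← A.direction.orthogonal_orthogonal, Submodule.mem_orthogonal']
  intro w hw
  by_cases hw₀ : w = 0
  · rw [hw₀, inner_zero_right]
  obtain ⟨c, hc⟩ := exists_smul_mem_receiverQuadric hw hw₀ hb.le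
  have hcw := (affine_eq_zero_and_inner_eq_zero_of_mem_nullPolar hu hq hc).2
  rw [real_inner_smul_right] at hcw
  refine (mul_eq_zero.mp hcw).resolve_left ?_
  rintro rfl
  have hnorm := (mk_mem_receiverQuadric_iff.mp hc).2
  simp [hb.ne] at hnorm

theorem sub_mem_direction_of_radiusSq_nonpos (hu : u ∈ A.direction)
    (h : (receiverQuadric A u v α β).Nontrivial) (hnonpos : ∀ b, radiusSq u v α β b ≤ 0)
    (hq : (τ, y) ∈ nullPolar (receiverQuadric A u v α β)) : y - v ∈ A.direction := by
  obtain ⟨_, ⟨p, hp, rfl⟩, _, ⟨p', hp', rfl⟩, hne⟩ := nontrivial_fst_image_receiverQuadric h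
  have radiusSq_eq_zero {p : ℝ × E} (hp : p ∈ receiverQuadric A u v α β) :
      radiusSq u v α β p.1 = 0 :=
    (hnonpos p.1).antisymm (radiusSq_nonneg_of_mem_receiverQuadric hp)
  have lightlike {p : ℝ × E} (hp : p ∈ receiverQuadric A u v α β) :
      ‖y - v - p.1 • u‖ ^ 2 = (τ - p.1) ^ 2 := by
    have hsep := hq p hp
    rw [eq_mk_of_mem_receiverQuadric_of_radiusSq_eq_zero hp (radiusSq_eq_zero hp)] at hsep
    rw [sub_sub, norm_sub_rev, hsep, sub_sq_comm]
  have hnorm : ‖u‖ = 1 := by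
    have hlead : 1 - ‖u‖ ^ 2 = 0 := leadingCoeff_eq_zero_of_quadratic_nonpos hnonpos hne
      (radiusSq_eq_zero hp) (radiusSq_eq_zero hp')
    exact (pow_eq_one_iff_of_nonneg (norm_nonneg u) two_ne_zero).mp (by linarith)
  rw [eq_smul_of_norm_sub_smul_sq_eq hnorm hne (lightlike hp) (lightlike hp')]
  exact Submodule.smul_mem _ τ hu

theorem nullPolar_receiverQuadric [A.direction.HasOrthogonalProjection] (hu : u ∈ A.direction)
    (hv : v ∈ A) (h : (receiverQuadric A u v α β).Nontrivial) :
    nullPolar (receiverQuadric A u v α β) = emitterQuadric A u v α β := by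
  refine Set.Subset.antisymm ?_
    (subset_nullPolar_comm.mp (receiverQuadric_subset_nullPolar_emitterQuadric hu hv))
  rintro ⟨τ, y⟩ hq
  refine ⟨(A.vsub_right_mem_direction_iff_mem hv y).mp ?_,
    emitter_equations_of_mem_nullPolar hu h hq⟩
  by_cases hpos : ∃ b, 0 < radiusSq u v α β b
  · obtain ⟨b, hb⟩ := hpos
    exact sub_mem_direction_of_radiusSq_pos hu hb hq
  · push Not at hpos
    exact sub_mem_direction_of_radiusSq_nonpos hu h hpos hq

theorem stmt_4_general {ι : Type*} (s : ι → E) (t : ι → ℝ)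
    [(affineSpan ℝ (Set.range s)).direction.HasOrthogonalProjection] (u v : E) (α β : ℝ)
    (hu : u ∈ (affineSpan ℝ (Set.range s)).direction)
    (hα : ∀ i, ⟪u, s i⟫ - α = t i)
    (hv : v ∈ affineSpan ℝ (Set.range s))
    (hβ : ∀ i, 2 * ⟪s i, v⟫ - β = ‖s i‖ ^ 2 - t i ^ 2)
    (X : Set (ℝ × E)) (hX : X = {p : ℝ × E | ∀ i, ‖s i - p.2‖ ^ 2 = (t i - p.1) ^ 2})
    (S : Set (ℝ × E)) (hS : S = {q : ℝ × E | ∀ p ∈ X, ‖q.2 - p.2‖ ^ 2 = (q.1 - p.1) ^ 2})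
    (S' : Set (ℝ × E))
    (hS' : S' = {q : ℝ × E | q.2 ∈ affineSpan ℝ (Set.range s) ∧ q.1 = ⟪u, q.2⟫ - α ∧
      ‖q.2‖ ^ 2 - ⟪u, q.2⟫ ^ 2 + 2 * ⟪α • u - v, q.2⟫ + β - α ^ 2 = 0})
    (hnontrivial : X.Nontrivial) : S = S' := by
  have hX_polar : X = nullPolar (Set.range fun i ↦ (t i, s i)) := by
    rw [hX]
    ext p
    simp only [nullPolar, Set.mem_ofPred_eq, Set.forall_mem_range]
  have hX_receiver : X = receiverQuadric (affineSpan ℝ (Set.range s)) u v α β := by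
    refine hX_polar.trans (nullPolar_eq_receiverQuadric ?_ ?_ hu hv)
    · exact Set.range_subset_iff.mpr fun i ↦
        ⟨mem_affineSpan ℝ (Set.mem_range_self i), hα i, hβ i⟩
    · rw [← Set.range_comp, Function.comp_def]
  calc S = nullPolar X := hS.trans (Set.ext fun _ ↦ mem_nullPolar_iff.symm)
    _ = emitterQuadric (affineSpan ℝ (Set.range s)) u v α β := by
      rw [hX_receiver, nullPolar_receiverQuadric hu hv (hX_receiver ▸ hnontrivial)]
    _ = S' := (hS'.trans (Set.ext fun _ ↦ mem_emitterQuadric_iff.symm)).symm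

end InnerProductSpace

theorem stmt_4 {n m : ℕ} [NeZero m] (hn : 1 ≤ n) (hm : m ≤ n + 1)
    (s : Fin m → EuclideanSpace ℝ (Fin n)) (t : Fin m → ℝ)
    (hindep : AffineIndependent ℝ s)
    (u v : EuclideanSpace ℝ (Fin n)) (α β : ℝ)
    (hu : u ∈ Submodule.span ℝ (Set.range fun i => s i - s 0))
    (hα : ∀ i, ⟪u, s i⟫ - α = t i)
    (hv : v ∈ affineSpan ℝ (Set.range s))
    (hβ : ∀ i, 2 * ⟪s i, v⟫ - β = ‖s i‖ ^ 2 - t i ^ 2)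
    (X : Set (ℝ × EuclideanSpace ℝ (Fin n)))
    (hX : X = {p : ℝ × EuclideanSpace ℝ (Fin n) | ∀ i, ‖s i - p.2‖ ^ 2 = (t i - p.1) ^ 2})
    (S : Set (ℝ × EuclideanSpace ℝ (Fin n)))
    (hS : S = {q : ℝ × EuclideanSpace ℝ (Fin n) | ∀ p ∈ X, ‖q.2 - p.2‖ ^ 2 = (q.1 - p.1) ^ 2})
    (S' : Set (ℝ × EuclideanSpace ℝ (Fin n)))
    (hS' : S' = {q : ℝ × EuclideanSpace ℝ (Fin n) | q.2 ∈ affineSpan ℝ (Set.range s) ∧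
        q.1 = ⟪u, q.2⟫ - α ∧ ‖q.2‖ ^ 2 - ⟪u, q.2⟫ ^ 2 + 2 * ⟪α • u - v, q.2⟫ + β - α ^ 2 = 0}) :
    X.Nontrivial → S = S' :=
  stmt_4_general s t u v α β
    (by rwa [direction_affineSpan, vectorSpan_range_eq_span_range_vsub_right ℝ s 0])
    hα hv hβ X hX S hS S' hS'
end

section
/- Let (t,s) ∈ ℝ × ℝⁿ satisfy ⟨s, wⱼ⟩ = ⟨s₁, wⱼ⟩ for all j = 1,…,k and t = ⟨u, s⟩ − α, and let 𝔛′ = {(b,x) ∈ 𝔛 : ‖s − x‖² = (t − b)²} be the solution set of the system enlarged by the pair (t,s). Then 𝔛′ = 𝔛 if h̃(s) = 0, and 𝔛′ = ∅ if h̃(s) ≠ 0. -/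
open scoped RealInnerProductSpace

/-!
For a fixed candidate solution `(b, x)`, the residual `‖y - x‖² - (⟪u, y⟫ - α - b)²` and `h̃ y` have
the same quadratic part `‖y‖² - ⟪u, y⟫²`, so their difference is an affine function of `y`.
If `(b, x)` solves the system, both vanish at every `sᵢ`; hence they agree on the whole affine span
of the `sᵢ`, and a new point `σ` of that span is compatible with `(b, x)` exactly when `h̃ σ = 0`, a
condition independent of `(b, x)`.
-/

section AffineSpan

variable {𝕜 E : Type*} [RCLike 𝕜] [NormedAddCommGroup E] [InnerProductSpace 𝕜 E]

theorem inner_eq_of_mem_affineSpan_s6 {S : Set E} {y z : E} {c : 𝕜}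
    (hS : ∀ x ∈ S, inner 𝕜 z x = c) (hy : y ∈ affineSpan 𝕜 S) : inner 𝕜 z y = c :=
  AffineMap.eqOn_affineSpan (f := (innerₛₗ 𝕜 z).toAffineMap) (g := AffineMap.const 𝕜 E c) hS hy

theorem mem_orthogonal_span_iff {W : Set E} {y : E} :
    y ∈ (Submodule.span 𝕜 W)ᗮ ↔ ∀ w ∈ W, inner 𝕜 y w = 0 := by
  rw [← Submodule.span_singleton_le_iff_mem, ← Submodule.isOrtho_iff_le, Submodule.isOrtho_span]
  simp only [Set.mem_singleton_iff, forall_eq]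

theorem mem_affineSpan_iff_inner_eq {S W : Set E} [(vectorSpan 𝕜 S).HasOrthogonalProjection]
    {p y : E} (hp : p ∈ S) (hW : Submodule.span 𝕜 W = (vectorSpan 𝕜 S)ᗮ) :
    y ∈ affineSpan 𝕜 S ↔ ∀ w ∈ W, inner 𝕜 y w = inner 𝕜 p w := by
  rw [← AffineSubspace.vsub_right_mem_direction_iff_mem (mem_affineSpan 𝕜 hp),
    direction_affineSpan, ← Submodule.orthogonal_orthogonal (vectorSpan 𝕜 S), ← hW,
    mem_orthogonal_span_iff]
  simp only [vsub_eq_sub, inner_sub_left, sub_eq_zero]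

end AffineSpan

section GlobalPositioning

variable {E ι : Type*} [NormedAddCommGroup E] [InnerProductSpace ℝ E]

/-- The solution set `𝔛` of the squared global positioning equations: the pairs `(b, x)` of a clock
bias and a receiver position compatible with the pseudoranges `t i` to the satellites `s i`. -/
def squaredGPSSolutions (s : ι → E) (t : ι → ℝ) : Set (ℝ × E) :=
  {p | ∀ i, ‖s i - p.2‖ ^ 2 = (t i - p.1) ^ 2}

/-- The defect of the squared positioning equation of a satellite `y` with pseudorange `τ` at the
candidate solution `p = (b, x)`. -/
def gpsResidual (y : E) (τ : ℝ) (p : ℝ × E) : ℝ :=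
  ‖y - p.2‖ ^ 2 - (τ - p.1) ^ 2

/-- The quadratic function `h̃` whose vanishing at `y` decides whether a satellite at `y`, with
pseudorange `⟪u, y⟫ - α`, is compatible with the system from which `u, v, α, β` are computed. -/
def compatibilityQuadric (u v : E) (α β : ℝ) (y : E) : ℝ :=
  ‖y‖ ^ 2 - ⟪u, y⟫ ^ 2 + 2 * ⟪α • u - v, y⟫ + β - α ^ 2

variable {u v : E} {α β : ℝ}

theorem compatibilityQuadric_eq_zero {y : E} {τ : ℝ} (hτ : ⟪u, y⟫ - α = τ)
    (hβ : 2 * ⟪y, v⟫ - β = ‖y‖ ^ 2 - τ ^ 2) : compatibilityQuadric u v α β y = 0 := by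
  rw [← hτ, real_inner_comm] at hβ
  simp only [compatibilityQuadric, inner_sub_left, real_inner_smul_left]
  linarith

theorem gpsResidual_sub_compatibilityQuadric (u v : E) (α β b : ℝ) (x y : E) :
    gpsResidual y (⟪u, y⟫ - α) (b, x) - compatibilityQuadric u v α β y =
      2 * ⟪v - x + b • u, y⟫ + (‖x‖ ^ 2 - 2 * α * b - b ^ 2 - β) := by
  rw [gpsResidual, norm_sub_sq_real, real_inner_comm]
  simp only [compatibilityQuadric, inner_add_left, inner_sub_left, real_inner_smul_left]
  ring

variable {s : ι → E} {t : ι → ℝ} {σ : E}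

theorem gpsResidual_eq_compatibilityQuadric (hα : ∀ i, ⟪u, s i⟫ - α = t i)
    (hβ : ∀ i, 2 * ⟪s i, v⟫ - β = ‖s i‖ ^ 2 - t i ^ 2)
    (hσ : σ ∈ affineSpan ℝ (Set.range s)) {p : ℝ × E} (hp : p ∈ squaredGPSSolutions s t) :
    gpsResidual σ (⟪u, σ⟫ - α) p = compatibilityQuadric u v α β σ := by
  obtain ⟨b, x⟩ := p
  have inner_range : ∀ y ∈ Set.range s,
      ⟪v - x + b • u, y⟫ = -(‖x‖ ^ 2 - 2 * α * b - b ^ 2 - β) / 2 := by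
    rintro _ ⟨i, rfl⟩
    have residual_zero : gpsResidual (s i) (⟪u, s i⟫ - α) (b, x) = 0 := by
      rw [hα i, gpsResidual, hp i, sub_self]
    linarith [gpsResidual_sub_compatibilityQuadric u v α β b x (s i),
      compatibilityQuadric_eq_zero (hα i) (hβ i)]
  linarith [gpsResidual_sub_compatibilityQuadric u v α β b x σ,
    inner_eq_of_mem_affineSpan_s6 inner_range hσ]

theorem stmt_6_general (hα : ∀ i, ⟪u, s i⟫ - α = t i)
    (hβ : ∀ i, 2 * ⟪s i, v⟫ - β = ‖s i‖ ^ 2 - t i ^ 2)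
    (hσ : σ ∈ affineSpan ℝ (Set.range s)) {τ : ℝ} (hτ : τ = ⟪u, σ⟫ - α) :
    (compatibilityQuadric u v α β σ = 0 →
      {p ∈ squaredGPSSolutions s t | ‖σ - p.2‖ ^ 2 = (τ - p.1) ^ 2} = squaredGPSSolutions s t) ∧
    (compatibilityQuadric u v α β σ ≠ 0 →
      {p ∈ squaredGPSSolutions s t | ‖σ - p.2‖ ^ 2 = (τ - p.1) ^ 2} = ∅) := by
  have compatible_iff : ∀ p ∈ squaredGPSSolutions s t,
      ‖σ - p.2‖ ^ 2 = (τ - p.1) ^ 2 ↔ compatibilityQuadric u v α β σ = 0 := fun p hp ↦ by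
    rw [← sub_eq_zero, ← gpsResidual, hτ, gpsResidual_eq_compatibilityQuadric hα hβ hσ hp]
  exact ⟨fun h ↦ Set.sep_eq_self_iff_mem_true.2 fun p hp ↦ (compatible_iff p hp).2 h,
    fun h ↦ Set.sep_eq_empty_iff_mem_false.2 fun p hp ↦ (compatible_iff p hp).not.2 h⟩

end GlobalPositioning

theorem stmt_6 {n m : ℕ} [NeZero m] (hn : 1 ≤ n) (hm : m ≤ n + 1)
    (s : Fin m → EuclideanSpace ℝ (Fin n)) (t : Fin m → ℝ)
    (hindep : AffineIndependent ℝ s)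
    (u v : EuclideanSpace ℝ (Fin n)) (α β : ℝ)
    (hu : u ∈ Submodule.span ℝ (Set.range fun i => s i - s 0))
    (hα : ∀ i, ⟪u, s i⟫ - α = t i)
    (hv : v ∈ affineSpan ℝ (Set.range s))
    (hβ : ∀ i, 2 * ⟪s i, v⟫ - β = ‖s i‖ ^ 2 - t i ^ 2)
    {k : ℕ} (hk : k = n - (m - 1))
    (w : Fin k → EuclideanSpace ℝ (Fin n)) (hw : Orthonormal ℝ w)
    (hwspan : Submodule.span ℝ (Set.range w)
      = (Submodule.span ℝ (Set.range fun i => s i - s 0))ᗮ)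
    (X : Set (ℝ × EuclideanSpace ℝ (Fin n)))
    (hX : X = {p : ℝ × EuclideanSpace ℝ (Fin n) | ∀ i, ‖s i - p.2‖ ^ 2 = (t i - p.1) ^ 2})
    (τ : ℝ) (σ : EuclideanSpace ℝ (Fin n))
    (hσw : ∀ j, ⟪σ, w j⟫ = ⟪s 0, w j⟫)
    (hτ : τ = ⟪u, σ⟫ - α)
    (X' : Set (ℝ × EuclideanSpace ℝ (Fin n)))
    (hX' : X' = {p ∈ X | ‖σ - p.2‖ ^ 2 = (τ - p.1) ^ 2}) :
    (‖σ‖ ^ 2 - ⟪u, σ⟫ ^ 2 + 2 * ⟪α • u - v, σ⟫ + β - α ^ 2 = 0 → X' = X) ∧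
    (‖σ‖ ^ 2 - ⟪u, σ⟫ ^ 2 + 2 * ⟪α • u - v, σ⟫ + β - α ^ 2 ≠ 0 → X' = ∅) := by
  subst hX' hX
  refine stmt_6_general hα hβ ((mem_affineSpan_iff_inner_eq (Set.mem_range_self 0) ?_).2
    (Set.forall_mem_range.2 hσw)) hτ
  exact hwspan.trans (congrArg _ (vectorSpan_range_eq_span_range_vsub_right ℝ s 0).symm)
end

section
/- Assume t₁,…,t_m are not all equal, 𝔛 has at least two elements, and e = ‖u‖ ∉ {0,1}. Then (e² − 1)·ρ > 0 (in particular ρ ≠ 0 and ρ/(e² − 1) > 0), and the intersection of Q_sol with the affine span of s₁,…,s_m consists exactly of the two points c + √(ρ/(e² − 1))·u and c − √(ρ/(e² − 1))·u; these two points belong to Q_sol, i.e., they are positions occurring in solutions of the squared global positioning equations. -/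
open scoped RealInnerProductSpace

/-!
Substituting `tᵢ = ⟪u, sᵢ⟫ - α` and `‖sᵢ‖² - tᵢ² = 2⟪sᵢ, v⟫ - β` turns the `i`-th equation into an
affine condition on `sᵢ` with gradient `y = x - (v + b u)`. Hence `(b, x)` is a solution iff `y` is
orthogonal to the directions of the affine span and `‖y‖²` equals a quadratic polynomial in `b`,
namely `ρ - (e² - 1)(b + μ)²` after completing the square. Positions in the affine span have
`y = 0`, so they are the points `v + b u` with `b` a root of this polynomial.

For the sign of `ρ`: if `e > 1` and `ρ ≤ 0`, then `‖y‖² ≥ 0` forces `b = -μ` and `y = 0`, so there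
is at most one solution. If `e < 1`, evaluating the polynomial at `b = tᵢ` gives
`-‖sᵢ - (v + tᵢ u)‖² ≤ 0`, so `ρ < 0` as soon as some `tᵢ ≠ -μ`.
-/

namespace SquaredGPS

variable {E ι : Type*} [NormedAddCommGroup E] [InnerProductSpace ℝ E]

/-- The set `𝔛` of pairs `(b, x)` of a clock bias and a position that solve the squared global
positioning equations for satellites at `s i` with time data `t i`. -/
def solutionSet (s : ι → E) (t : ι → ℝ) : Set (ℝ × E) :=
  {p | ∀ i, ‖s i - p.2‖ ^ 2 = (t i - p.1) ^ 2}

/-- The set `Q_sol` of positions occurring in solutions of the squared positioning equations. -/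
def positionSet (s : ι → E) (t : ι → ℝ) : Set E :=
  {x | ∃ b : ℝ, (b, x) ∈ solutionSet s t}

/-- The data `u, v, α, β` express `t i` and `‖s i‖ ^ 2 - t i ^ 2` as affine functions of `s i`,
with `u` in the direction of the affine span of the satellites and `v` in the affine span itself. -/
structure IsLinearization (s : ι → E) (t : ι → ℝ) (u v : E) (α β : ℝ) : Prop where
  mem_vectorSpan : u ∈ vectorSpan ℝ (Set.range s)
  inner_sub_eq : ∀ i, ⟪u, s i⟫ - α = t i
  mem_affineSpan : v ∈ affineSpan ℝ (Set.range s)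
  two_mul_inner_sub_eq : ∀ i, 2 * ⟪s i, v⟫ - β = ‖s i‖ ^ 2 - t i ^ 2

/-- The quadratic polynomial in the clock bias `b` whose value is the squared distance from
`v + b • u` to the position of any solution with clock bias `b`. -/
def sqOffset (u v : E) (α β b : ℝ) : ℝ :=
  b ^ 2 + 2 * α * b + β - ‖v + b • u‖ ^ 2

/-- The number `μ`: the critical point of `sqOffset` is `-μ`. It has the junk value `0` if
`‖u‖ = 1`. -/
noncomputable def mu (u v : E) (α : ℝ) : ℝ :=
  (⟪u, v⟫ - α) / (‖u‖ ^ 2 - 1)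

/-- The number `ρ`: the value of `sqOffset` at its critical point, provided `‖u‖ ≠ 1`. -/
noncomputable def rho (u v : E) (α β : ℝ) : ℝ :=
  (⟪u, v⟫ - α) ^ 2 / (‖u‖ ^ 2 - 1) - ‖v‖ ^ 2 + β

lemma forall_inner_eq_iff_mem_orthogonal {S : Set E} {v : E}
    (hv : v ∈ affineSpan ℝ S) (y : E) (k : ℝ) :
    (∀ p ∈ S, ⟪p, y⟫ = k) ↔ y ∈ (vectorSpan ℝ S)ᗮ ∧ ⟪v, y⟫ = k := by
  constructor
  · intro h
    have hspan : ∀ p ∈ affineSpan ℝ S, ⟪p, y⟫ = k :=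
      AffineMap.eqOn_affineSpan (f := ((innerₗ E).flip y).toAffineMap)
        (g := AffineMap.const ℝ E k) h
    refine ⟨(Submodule.mem_orthogonal _ y).2 fun w hw ↦ ?_, hspan v hv⟩
    have hwv := hspan (w + v) (vadd_mem_affineSpan_of_mem_affineSpan_of_mem_vectorSpan hv hw)
    rwa [inner_add_left, hspan v hv, add_eq_right] at hwv
  · rintro ⟨hy, rfl⟩ p hp
    have hpv : p - v ∈ vectorSpan ℝ S :=
      vsub_mem_vectorSpan_of_mem_affineSpan_of_mem_affineSpan (mem_affineSpan ℝ hp) hv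
    rw [← sub_eq_zero, ← inner_sub_left]
    exact Submodule.inner_right_of_mem_orthogonal hpv hy

lemma norm_sq_sub_one_ne_zero {F : Type*} [SeminormedAddGroup F] {u : F} (hu : ‖u‖ ≠ 1) :
    ‖u‖ ^ 2 - 1 ≠ 0 :=
  sub_ne_zero.2 fun h ↦ hu ((pow_eq_one_iff_of_nonneg (norm_nonneg u) two_ne_zero).1 h)

section Satellite

variable {s u v : E} {t α β : ℝ}

lemma norm_sub_sq_sub_sq (hα : ⟪u, s⟫ - α = t) (hβ : 2 * ⟪s, v⟫ - β = ‖s‖ ^ 2 - t ^ 2)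
    (b : ℝ) (x : E) :
    ‖s - x‖ ^ 2 - (t - b) ^ 2
      = ‖x‖ ^ 2 - (b ^ 2 + 2 * α * b + β) - 2 * ⟪s, x - (v + b • u)⟫ := by
  rw [norm_sub_sq_real, inner_sub_right, inner_add_right, real_inner_smul_right,
    real_inner_comm u s]
  linear_combination -hβ - 2 * b * hα

lemma sqOffset_eq_neg_norm_sq (hα : ⟪u, s⟫ - α = t)
    (hβ : 2 * ⟪s, v⟫ - β = ‖s‖ ^ 2 - t ^ 2) :
    sqOffset u v α β t = -‖s - (v + t • u)‖ ^ 2 := by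
  have h := norm_sub_sq_sub_sq hα hβ t (v + t • u)
  rw [sub_self (v + t • u), inner_zero_right] at h
  rw [sqOffset]
  linear_combination h

end Satellite

section Quadratic

variable {u : E} (v : E) (α β : ℝ)

lemma sqOffset_eq_rho_sub (hu : ‖u‖ ≠ 1) (b : ℝ) :
    sqOffset u v α β b = rho u v α β - (‖u‖ ^ 2 - 1) * (b + mu u v α) ^ 2 := by
  have he := norm_sq_sub_one_ne_zero hu
  rw [sqOffset, rho, mu, norm_add_sq_real, real_inner_smul_right, norm_smul, mul_pow,
    Real.norm_eq_abs, sq_abs, real_inner_comm]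
  field_simp
  ring

lemma setOf_sqOffset_eq_zero (hu : ‖u‖ ≠ 1) (hρ : 0 ≤ rho u v α β / (‖u‖ ^ 2 - 1)) :
    {b | sqOffset u v α β b = 0} =
      {-mu u v α + √(rho u v α β / (‖u‖ ^ 2 - 1)),
        -mu u v α - √(rho u v α β / (‖u‖ ^ 2 - 1))} := by
  have he := norm_sq_sub_one_ne_zero hu
  ext b
  calc sqOffset u v α β b = 0
      ↔ (b + mu u v α) ^ 2 = √(rho u v α β / (‖u‖ ^ 2 - 1)) ^ 2 := by
        rw [sqOffset_eq_rho_sub v α β hu, Real.sq_sqrt hρ, eq_div_iff he, sub_eq_zero, eq_comm,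
          mul_comm]
    _ ↔ b = -mu u v α + √(rho u v α β / (‖u‖ ^ 2 - 1)) ∨
          b = -mu u v α - √(rho u v α β / (‖u‖ ^ 2 - 1)) := by
        rw [sq_eq_sq_iff_eq_or_eq_neg]
        refine or_congr ?_ ?_ <;> constructor <;> intro h <;> linarith

end Quadratic

lemma rho_neg_of_norm_lt_one {s u v : E} {t α β : ℝ} (hα : ⟪u, s⟫ - α = t)
    (hβ : 2 * ⟪s, v⟫ - β = ‖s‖ ^ 2 - t ^ 2) (hu : ‖u‖ < 1) (ht : t ≠ -mu u v α) :
    rho u v α β < 0 := by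
  have hsq : 0 < (t + mu u v α) ^ 2 :=
    sq_pos_of_ne_zero fun h ↦ ht (eq_neg_of_add_eq_zero_left h)
  have he : ‖u‖ ^ 2 - 1 < 0 := sub_neg.2 (pow_lt_one₀ (norm_nonneg u) hu two_ne_zero)
  have hval : rho u v α β - (‖u‖ ^ 2 - 1) * (t + mu u v α) ^ 2 = -‖s - (v + t • u)‖ ^ 2 := by
    rw [← sqOffset_eq_rho_sub v α β hu.ne, sqOffset_eq_neg_norm_sq hα hβ]
  linarith [mul_neg_of_neg_of_pos he hsq, sq_nonneg ‖s - (v + t • u)‖]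

namespace IsLinearization

variable {s : ι → E} {t : ι → ℝ} {u v : E} {α β : ℝ}

lemma mem_solutionSet_iff (h : IsLinearization s t u v α β) {b : ℝ} {x : E} :
    (b, x) ∈ solutionSet s t ↔ x - (v + b • u) ∈ (vectorSpan ℝ (Set.range s))ᗮ ∧
      ‖x - (v + b • u)‖ ^ 2 = sqOffset u v α β b := by
  set y := x - (v + b • u) with hy
  set k := (‖x‖ ^ 2 - (b ^ 2 + 2 * α * b + β)) / 2 with hk
  have hlin : (b, x) ∈ solutionSet s t ↔ ∀ p ∈ Set.range s, ⟪p, y⟫ = k := by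
    rw [Set.forall_mem_range]
    refine forall_congr' fun i ↦ ?_
    have hi := norm_sub_sq_sub_sq (h.inner_sub_eq i) (h.two_mul_inner_sub_eq i) b x
    constructor <;> intro <;> linarith
  rw [hlin, forall_inner_eq_iff_mem_orthogonal h.mem_affineSpan]
  refine and_congr_right fun hyU ↦ ?_
  have huy : ⟪u, y⟫ = 0 := Submodule.inner_right_of_mem_orthogonal h.mem_vectorSpan hyU
  have hx : ‖x‖ ^ 2 = ‖v + b • u‖ ^ 2 + 2 * ⟪v, y⟫ + ‖y‖ ^ 2 := by
    rw [← add_sub_cancel (v + b • u) x, ← hy, norm_add_sq_real, inner_add_left,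
      real_inner_smul_left, huy, mul_zero, add_zero]
  rw [sqOffset]
  constructor <;> intro <;> linarith

lemma positionSet_inter_affineSpan (h : IsLinearization s t u v α β) :
    positionSet s t ∩ affineSpan ℝ (Set.range s) =
      (fun b : ℝ ↦ v + b • u) '' {b | sqOffset u v α β b = 0} := by
  have hline (b : ℝ) : v + b • u ∈ affineSpan ℝ (Set.range s) := by
    rw [add_comm]
    exact vadd_mem_affineSpan_of_mem_affineSpan_of_mem_vectorSpan h.mem_affineSpan
      (Submodule.smul_mem _ b h.mem_vectorSpan)
  ext x
  constructor
  · rintro ⟨⟨b, hbx⟩, hx⟩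
    obtain ⟨horth, hnorm⟩ := h.mem_solutionSet_iff.1 hbx
    have hmem : x - (v + b • u) ∈ vectorSpan ℝ (Set.range s) :=
      vsub_mem_vectorSpan_of_mem_affineSpan_of_mem_affineSpan hx (hline b)
    have hzero : x - (v + b • u) = 0 :=
      inner_self_eq_zero.1 (Submodule.inner_right_of_mem_orthogonal hmem horth)
    refine ⟨b, ?_, (sub_eq_zero.1 hzero).symm⟩
    simpa [hzero] using hnorm.symm
  · rintro ⟨b, hb, rfl⟩
    refine ⟨⟨b, h.mem_solutionSet_iff.2 ?_⟩, hline b⟩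
    simpa using hb.symm

lemma solutionSet_subsingleton (h : IsLinearization s t u v α β) (hu : 1 < ‖u‖)
    (hρ : rho u v α β ≤ 0) : (solutionSet s t).Subsingleton := by
  suffices hunique : ∀ p ∈ solutionSet s t, p = (-mu u v α, v + (-mu u v α) • u) from
    fun p hp q hq ↦ (hunique p hp).trans (hunique q hq).symm
  rintro ⟨b, x⟩ hbx
  have he : 0 < ‖u‖ ^ 2 - 1 := sub_pos.2 (one_lt_pow₀ hu two_ne_zero)
  have hnorm := (h.mem_solutionSet_iff.1 hbx).2
  rw [sqOffset_eq_rho_sub v α β hu.ne'] at hnorm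
  have hb : b = -mu u v α := by
    have hsq : (b + mu u v α) ^ 2 ≤ 0 := by nlinarith [sq_nonneg ‖x - (v + b • u)‖]
    exact eq_neg_of_add_eq_zero_left (sq_nonpos_iff _ |>.1 hsq)
  have hx : x - (v + b • u) = 0 := by
    rw [← norm_eq_zero, ← sq_nonpos_iff]
    nlinarith [sq_nonneg (b + mu u v α)]
  rw [← hb, sub_eq_zero.1 hx]

lemma norm_sq_sub_one_mul_rho_pos (h : IsLinearization s t u v α β) (ht : ∃ i j, t i ≠ t j)
    (hX : (solutionSet s t).Nontrivial) (hu : ‖u‖ ≠ 1) :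
    0 < (‖u‖ ^ 2 - 1) * rho u v α β := by
  rcases hu.lt_or_gt with hlt | hgt
  · obtain ⟨i, hi⟩ : ∃ i, t i ≠ -mu u v α := by
      by_contra! hconst
      obtain ⟨i, j, hij⟩ := ht
      exact hij ((hconst i).trans (hconst j).symm)
    have he : ‖u‖ ^ 2 - 1 < 0 := sub_neg.2 (pow_lt_one₀ (norm_nonneg u) hlt two_ne_zero)
    exact mul_pos_of_neg_of_neg he
      (rho_neg_of_norm_lt_one (h.inner_sub_eq i) (h.two_mul_inner_sub_eq i) hlt hi)
  · have he : 0 < ‖u‖ ^ 2 - 1 := sub_pos.2 (one_lt_pow₀ hgt two_ne_zero)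
    refine mul_pos he (lt_of_not_ge fun hρ ↦ ?_)
    exact Set.not_subsingleton_iff.2 hX (h.solutionSet_subsingleton hgt hρ)

end IsLinearization

end SquaredGPS

open SquaredGPS in
theorem stmt_8_general {E ι : Type*} [NormedAddCommGroup E] [InnerProductSpace ℝ E]
    {s : ι → E} {t : ι → ℝ} {u v : E} {α β : ℝ} (h : IsLinearization s t u v α β)
    (ht : ∃ i j, t i ≠ t j) (hX : (solutionSet s t).Nontrivial) (hu : ‖u‖ ≠ 1) :
    let r := √(rho u v α β / (‖u‖ ^ 2 - 1))
    let c := v - mu u v α • u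
    (‖u‖ ^ 2 - 1) * rho u v α β > 0 ∧
    positionSet s t ∩ affineSpan ℝ (Set.range s) = {c + r • u, c - r • u} ∧
    c + r • u ∈ positionSet s t ∧ c - r • u ∈ positionSet s t := by
  intro r c
  have hpos := h.norm_sq_sub_one_mul_rho_pos ht hX hu
  have hinter : positionSet s t ∩ affineSpan ℝ (Set.range s) = {c + r • u, c - r • u} := by
    have hdiv : 0 ≤ rho u v α β / (‖u‖ ^ 2 - 1) :=
      (div_pos_iff.2 ((mul_pos_iff.1 hpos).imp And.symm And.symm)).le
    have hplus : v + (-mu u v α + r) • u = c + r • u := by module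
    have hminus : v + (-mu u v α - r) • u = c - r • u := by module
    rw [h.positionSet_inter_affineSpan, setOf_sqOffset_eq_zero v α β hu hdiv, Set.image_pair,
      hplus, hminus]
  have hsub : ({c + r • u, c - r • u} : Set E) ⊆ positionSet s t := hinter ▸ Set.inter_subset_left
  exact ⟨hpos, hinter, hsub (Set.mem_insert _ _), hsub (Set.mem_insert_of_mem _ rfl)⟩

theorem stmt_8 {n m : ℕ} [NeZero m] (hn : 1 ≤ n) (hm : m ≤ n + 1)
    (s : Fin m → EuclideanSpace ℝ (Fin n)) (t : Fin m → ℝ)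
    (hindep : AffineIndependent ℝ s)
    (u v : EuclideanSpace ℝ (Fin n)) (α β : ℝ)
    (hu : u ∈ Submodule.span ℝ (Set.range fun i => s i - s 0))
    (hα : ∀ i, ⟪u, s i⟫ - α = t i)
    (hv : v ∈ affineSpan ℝ (Set.range s))
    (hβ : ∀ i, 2 * ⟪s i, v⟫ - β = ‖s i‖ ^ 2 - t i ^ 2)
    (X : Set (ℝ × EuclideanSpace ℝ (Fin n)))
    (hX : X = {p : ℝ × EuclideanSpace ℝ (Fin n) | ∀ i, ‖s i - p.2‖ ^ 2 = (t i - p.1) ^ 2})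
    (Qsol : Set (EuclideanSpace ℝ (Fin n)))
    (hQsol : Qsol = {x : EuclideanSpace ℝ (Fin n) | ∃ b : ℝ, (b, x) ∈ X})
    (htne : ∃ i j : Fin m, t i ≠ t j)
    (hX2 : X.Nontrivial)
    (e μ ρ : ℝ) (he : e = ‖u‖) (he0 : e ≠ 0) (he1 : e ≠ 1)
    (hμ : μ = (⟪u, v⟫ - α) / (e ^ 2 - 1))
    (hρ : ρ = (⟪u, v⟫ - α) ^ 2 / (e ^ 2 - 1) - ‖v‖ ^ 2 + β)
    (c : EuclideanSpace ℝ (Fin n)) (hc : c = v - μ • u) :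
    (e ^ 2 - 1) * ρ > 0 ∧
    Qsol ∩ (affineSpan ℝ (Set.range s) : Set (EuclideanSpace ℝ (Fin n)))
      = {c + Real.sqrt (ρ / (e ^ 2 - 1)) • u, c - Real.sqrt (ρ / (e ^ 2 - 1)) • u} ∧
    c + Real.sqrt (ρ / (e ^ 2 - 1)) • u ∈ Qsol ∧
    c - Real.sqrt (ρ / (e ^ 2 - 1)) • u ∈ Qsol := by
  subst hX hQsol he hμ hρ hc
  exact stmt_8_general ⟨(vectorSpan_range_eq_span_range_vsub_right ℝ s 0).ge hu, hα, hv, hβ⟩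
    htne hX2 he1
end

section
/- Assume t₁,…,t_m are not all equal, 𝔛 has at least two elements, and e = ‖u‖ ∉ {0,1}. Then the intersection of Q_sat with the line {v + λ·u : λ ∈ ℝ} consists exactly of the two points c + e⁻¹·√(ρ/(e² − 1))·u and c − e⁻¹·√(ρ/(e² − 1))·u. -/
open scoped RealInnerProductSpace

/-!
Write a point of `ℝ × E` as `(b, v + b • u + w)`. In the variable `w` the positioning equations
become linear up to one common quadratic term, so that `𝔛` is the quadric
`‖w‖² + (e² - 1) (b + μ)² = ρ` with `w` orthogonal to the differences of the satellites.
Consequently `‖v + l • u - x‖² - (τ - b)²` is affine in `b` on `𝔛`. Since `b` takes at least two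
values there, both of its coefficients have to vanish, which determines `τ` and leaves
`(e² - 1) (e (l + μ))² = ρ`. The signs of `ρ` and `e² - 1` agree because a satellite satisfies the
quadric equation with `-‖w‖²` in place of `‖w‖²`.
-/

variable {E : Type*} [NormedAddCommGroup E] [InnerProductSpace ℝ E]

/-- The solution set `𝔛` of the squared global positioning equations for the satellites `s i` with
signal times `t i`; a solution `(b, x)` consists of a clock bias and a receiver position. -/
def gpsSolutions {ι : Type*} (s : ι → E) (t : ι → ℝ) : Set (ℝ × E) :=
  {p | ∀ i, ‖s i - p.2‖ ^ 2 = (t i - p.1) ^ 2}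

/-- The set `𝒮` of all satellites, as pairs of a time and a position, whose squared positioning
equation holds at every point of `X`. -/
def compatibleSatellites (X : Set (ℝ × E)) : Set (ℝ × E) :=
  {q | ∀ p ∈ X, ‖q.2 - p.2‖ ^ 2 = (q.1 - p.1) ^ 2}

/-- The set `Q_sat` of positions of the satellites compatible with `X`. -/
def satellitePositions (X : Set (ℝ × E)) : Set E :=
  {x | ∃ τ : ℝ, (τ, x) ∈ compatibleSatellites X}

/-- The quadric `‖w‖² + (‖u‖² - 1) (b + μ)² = ρ` in the points `(b, v + b • u + w)` with `w`
orthogonal to `K`: the normal form of the solution set of the positioning equations. -/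
def gpsQuadric (K : Submodule ℝ E) (u v : E) (μ ρ : ℝ) : Set (ℝ × E) :=
  {p | p.2 - v - p.1 • u ∈ Kᗮ ∧
    ‖p.2 - v - p.1 • u‖ ^ 2 + (‖u‖ ^ 2 - 1) * (p.1 + μ) ^ 2 = ρ}

section RealEquations

variable {D e μ ρ l : ℝ}

lemma mul_sqrt_div_sq (hD : D ≠ 0) (hρ : 0 ≤ ρ / D) : D * √(ρ / D) ^ 2 = ρ := by
  rw [Real.sq_sqrt hρ, mul_div_cancel₀ _ hD]

lemma mul_sq_mul_add_eq_iff (hD : D ≠ 0) (he : e ≠ 0) (hρ : 0 ≤ ρ / D) :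
    D * (e * (l + μ)) ^ 2 = ρ ↔ l = -μ + e⁻¹ * √(ρ / D) ∨ l = -μ - e⁻¹ * √(ρ / D) := by
  have hsq := mul_sqrt_div_sq hD hρ
  generalize √(ρ / D) = r at hsq ⊢
  rw [← hsq, mul_right_inj' hD, sq_eq_sq_iff_eq_or_eq_neg, ← eq_inv_mul_iff_mul_eq₀ he,
    ← eq_inv_mul_iff_mul_eq₀ he, mul_neg, ← eq_sub_iff_add_eq, ← eq_sub_iff_add_eq,
    sub_eq_neg_add, neg_sub_comm]

lemma div_nonneg_of_sq_add_eq_of_neg_sq_add_eq {a a' y y' : ℝ} (h : a ^ 2 + D * y ^ 2 = ρ)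
    (h' : -a' ^ 2 + D * y' ^ 2 = ρ) : 0 ≤ ρ / D := by
  rcases le_total 0 D with hD | hD
  · exact div_nonneg (h ▸ by positivity) hD
  · refine div_nonneg_of_nonpos ?_ hD
    linarith [sq_nonneg a', mul_nonpos_of_nonpos_of_nonneg hD (sq_nonneg y')]

end RealEquations

section Quadric

variable {K : Submodule ℝ E} {u v : E} {μ ρ b l : ℝ} {x : E}

lemma add_smul_mem_gpsQuadric (hb : (‖u‖ ^ 2 - 1) * (b + μ) ^ 2 = ρ) :
    (b, v + b • u) ∈ gpsQuadric K u v μ ρ := by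
  simp [gpsQuadric, hb]

lemma eq_add_smul_of_mem_gpsQuadric (hx : (b, x) ∈ gpsQuadric K u v μ ρ)
    (hb : (‖u‖ ^ 2 - 1) * (b + μ) ^ 2 = ρ) : x = v + b • u := by
  have hw : ‖x - v - b • u‖ ^ 2 = 0 := by linarith [hx.2]
  rwa [sq_eq_zero_iff, norm_eq_zero, sub_sub, sub_eq_zero] at hw

lemma nontrivial_image_fst_gpsQuadric (hD : ‖u‖ ^ 2 - 1 ≠ 0) (hρ : 0 ≤ ρ / (‖u‖ ^ 2 - 1))
    (hX : (gpsQuadric K u v μ ρ).Nontrivial) :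
    (Prod.fst '' gpsQuadric K u v μ ρ).Nontrivial := by
  obtain ⟨b₀, hb₀⟩ : ∃ b₀, (‖u‖ ^ 2 - 1) * (b₀ + μ) ^ 2 = ρ :=
    ⟨√(ρ / (‖u‖ ^ 2 - 1)) - μ, by rw [sub_add_cancel, mul_sqrt_div_sq hD hρ]⟩
  obtain ⟨⟨b, x⟩, hbx, hne⟩ := hX.exists_ne (b₀, v + b₀ • u)
  refine ⟨b, ⟨_, hbx, rfl⟩, b₀, ⟨_, add_smul_mem_gpsQuadric hb₀, rfl⟩, ?_⟩
  rintro rfl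
  exact hne (by rw [eq_add_smul_of_mem_gpsQuadric hbx hb₀])

lemma norm_add_smul_sub_sq_of_mem_gpsQuadric (hu : u ∈ K) (hx : (b, x) ∈ gpsQuadric K u v μ ρ) :
    ‖v + l • u - x‖ ^ 2 =
      (l - b) ^ 2 * ‖u‖ ^ 2 + (ρ - (‖u‖ ^ 2 - 1) * (b + μ) ^ 2) := by
  have horth : ⟪u, x - v - b • u⟫ = 0 := hx.1 u hu
  have hdecomp : v + l • u - x = (l - b) • u - (x - v - b • u) := by module
  rw [hdecomp, norm_sub_sq_real, real_inner_smul_left, horth, norm_smul, mul_pow,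
    Real.norm_eq_abs, sq_abs]
  linear_combination hx.2

lemma add_smul_mem_satellitePositions_gpsQuadric_iff (hu : u ∈ K)
    (hfst : (Prod.fst '' gpsQuadric K u v μ ρ).Nontrivial) :
    v + l • u ∈ satellitePositions (gpsQuadric K u v μ ρ) ↔
      (‖u‖ ^ 2 - 1) * (‖u‖ * (l + μ)) ^ 2 = ρ := by
  constructor
  · rintro ⟨τ, hτ⟩
    obtain ⟨_, ⟨⟨b₁, x₁⟩, h₁, rfl⟩, _, ⟨⟨b₂, x₂⟩, h₂, rfl⟩, hb : b₁ ≠ b₂⟩ := hfst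
    have e₁ := (norm_add_smul_sub_sq_of_mem_gpsQuadric hu h₁).symm.trans (hτ _ h₁)
    have e₂ := (norm_add_smul_sub_sq_of_mem_gpsQuadric hu h₂).symm.trans (hτ _ h₂)
    have hτ_eq : τ = l * ‖u‖ ^ 2 + (‖u‖ ^ 2 - 1) * μ := by
      apply mul_left_cancel₀ (sub_ne_zero.mpr hb)
      linear_combination (e₁ - e₂) / 2
    rw [hτ_eq] at e₁
    linear_combination -e₁
  · intro hl
    refine ⟨l * ‖u‖ ^ 2 + (‖u‖ ^ 2 - 1) * μ, fun ⟨b, x⟩ hx ↦ ?_⟩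
    rw [norm_add_smul_sub_sq_of_mem_gpsQuadric hu hx]
    linear_combination -hl

lemma satellitePositions_gpsQuadric_inter_line (hu : u ∈ K) (hu_zero : ‖u‖ ≠ 0)
    (hD : ‖u‖ ^ 2 - 1 ≠ 0) (hρ : 0 ≤ ρ / (‖u‖ ^ 2 - 1))
    (hX : (gpsQuadric K u v μ ρ).Nontrivial) :
    satellitePositions (gpsQuadric K u v μ ρ) ∩ {x | ∃ l : ℝ, x = v + l • u} =
      {v + (-μ + ‖u‖⁻¹ * √(ρ / (‖u‖ ^ 2 - 1))) • u,
        v + (-μ - ‖u‖⁻¹ * √(ρ / (‖u‖ ^ 2 - 1))) • u} := by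
  have hmem (l : ℝ) : v + l • u ∈ satellitePositions (gpsQuadric K u v μ ρ) ↔
      l = -μ + ‖u‖⁻¹ * √(ρ / (‖u‖ ^ 2 - 1)) ∨ l = -μ - ‖u‖⁻¹ * √(ρ / (‖u‖ ^ 2 - 1)) :=
    (add_smul_mem_satellitePositions_gpsQuadric_iff hu
      (nontrivial_image_fst_gpsQuadric hD hρ hX)).trans (mul_sq_mul_add_eq_iff hD hu_zero hρ)
  ext x
  constructor
  · rintro ⟨hx, l, rfl⟩
    exact ((hmem l).mp hx).imp (fun hl ↦ by rw [hl]) (fun hl ↦ by rw [hl, Set.mem_singleton_iff])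
  · rintro (rfl | rfl)
    · exact ⟨(hmem _).mpr (Or.inl rfl), _, rfl⟩
    · exact ⟨(hmem _).mpr (Or.inr rfl), _, rfl⟩

end Quadric

section NormalForm

lemma mem_vectorSpan_orthogonal_iff {P : Set E} {w : E} :
    w ∈ (vectorSpan ℝ P)ᗮ ↔ ∀ p ∈ P, ∀ q ∈ P, ⟪p - q, w⟫ = 0 := by
  refine ⟨fun hw p hp q hq ↦ hw _ (vsub_mem_vectorSpan ℝ hp hq), fun hw ↦ ?_⟩
  suffices hle : vectorSpan ℝ P ≤ (ℝ ∙ w)ᗮ from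
    fun d hd ↦ Submodule.mem_orthogonal_singleton_iff_inner_left.mp (hle hd)
  rw [vectorSpan_def, Submodule.span_le]
  rintro _ ⟨p, hp, q, hq, rfl⟩
  exact Submodule.mem_orthogonal_singleton_iff_inner_left.mpr (hw p hp q hq)

variable {u v : E} {α β μ ρ : ℝ}

lemma norm_sub_sq_sub_sq_eq {p : E} {τ : ℝ} (hα : ⟪u, p⟫ - α = τ)
    (hβ : 2 * ⟪p, v⟫ - β = ‖p‖ ^ 2 - τ ^ 2) (hμ : μ * (‖u‖ ^ 2 - 1) = ⟪u, v⟫ - α)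
    (hρ : ρ = μ ^ 2 * (‖u‖ ^ 2 - 1) - ‖v‖ ^ 2 + β) (b : ℝ) (x : E) :
    ‖p - x‖ ^ 2 - (τ - b) ^ 2 =
      ‖x - v - b • u‖ ^ 2 + (‖u‖ ^ 2 - 1) * (b + μ) ^ 2 - ρ
        - 2 * ⟪p - v - b • u, x - v - b • u⟫ := by
  obtain ⟨w, rfl⟩ : ∃ w, x = v + b • u + w := ⟨x - (v + b • u), by abel⟩
  have hw : v + b • u + w - v - b • u = w := by abel
  rw [hw]
  simp only [← real_inner_self_eq_norm_sq] at hβ hμ hρ ⊢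
  simp only [inner_add_left, inner_add_right, inner_sub_left, inner_sub_right,
    real_inner_smul_left, real_inner_smul_right, real_inner_comm u v, real_inner_comm u p,
    real_inner_comm u w, real_inner_comm v w, real_inner_comm p v, real_inner_comm p w]
    at hα hβ hμ ⊢
  linear_combination -hβ - 2 * b * hα - 2 * b * hμ + hρ

variable {ι : Type*} {s : ι → E} {t : ι → ℝ}

lemma gpsSolutions_eq_gpsQuadric (hu : u ∈ vectorSpan ℝ (Set.range s))
    (hα : ∀ i, ⟪u, s i⟫ - α = t i) (hv : v ∈ affineSpan ℝ (Set.range s))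
    (hβ : ∀ i, 2 * ⟪s i, v⟫ - β = ‖s i‖ ^ 2 - t i ^ 2)
    (hμ : μ * (‖u‖ ^ 2 - 1) = ⟪u, v⟫ - α)
    (hρ : ρ = μ ^ 2 * (‖u‖ ^ 2 - 1) - ‖v‖ ^ 2 + β) :
    gpsSolutions s t = gpsQuadric (vectorSpan ℝ (Set.range s)) u v μ ρ := by
  ext ⟨b, x⟩
  have hid i := norm_sub_sq_sub_sq_eq (hα i) (hβ i) hμ hρ b x
  have hinner (hw : x - v - b • u ∈ (vectorSpan ℝ (Set.range s))ᗮ) (i : ι) :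
      ⟪s i - v - b • u, x - v - b • u⟫ = 0 := by
    refine hw _ (sub_mem ?_ (Submodule.smul_mem _ b hu))
    rw [← direction_affineSpan]
    exact AffineSubspace.vsub_mem_direction (mem_affineSpan ℝ (Set.mem_range_self i)) hv
  constructor
  · intro (hx : ∀ i, ‖s i - x‖ ^ 2 = (t i - b) ^ 2)
    have hw : x - v - b • u ∈ (vectorSpan ℝ (Set.range s))ᗮ := by
      rw [mem_vectorSpan_orthogonal_iff]
      rintro _ ⟨i, rfl⟩ _ ⟨j, rfl⟩
      have hdiff : s i - s j = (s i - v - b • u) - (s j - v - b • u) := by abel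
      rw [hdiff, inner_sub_left]
      linarith [hid i, hid j, hx i, hx j]
    obtain ⟨_, i, rfl⟩ := (affineSpan_nonempty ℝ).mp ⟨v, hv⟩
    exact ⟨hw, by linarith [hid i, hx i, hinner hw i]⟩
  · rintro ⟨hw, hquad⟩ i
    linarith [hid i, hinner hw i]

lemma neg_norm_sq_add_eq_of_satellite {p : E} {τ : ℝ} (hα : ⟪u, p⟫ - α = τ)
    (hβ : 2 * ⟪p, v⟫ - β = ‖p‖ ^ 2 - τ ^ 2) (hμ : μ * (‖u‖ ^ 2 - 1) = ⟪u, v⟫ - α)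
    (hρ : ρ = μ ^ 2 * (‖u‖ ^ 2 - 1) - ‖v‖ ^ 2 + β) :
    -‖p - v - τ • u‖ ^ 2 + (‖u‖ ^ 2 - 1) * (τ + μ) ^ 2 = ρ := by
  have hid := norm_sub_sq_sub_sq_eq hα hβ hμ hρ τ p
  rw [sub_self, sub_self, norm_zero, real_inner_self_eq_norm_sq] at hid
  linarith

end NormalForm

theorem stmt_9_general {ι : Type*} {s : ι → E} {t : ι → ℝ} {u v : E} {α β μ ρ : ℝ}
    (hu : u ∈ vectorSpan ℝ (Set.range s)) (hα : ∀ i, ⟪u, s i⟫ - α = t i)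
    (hv : v ∈ affineSpan ℝ (Set.range s))
    (hβ : ∀ i, 2 * ⟪s i, v⟫ - β = ‖s i‖ ^ 2 - t i ^ 2)
    (hX : (gpsSolutions s t).Nontrivial) (hu_zero : ‖u‖ ≠ 0) (hu_one : ‖u‖ ≠ 1)
    (hμ : μ = (⟪u, v⟫ - α) / (‖u‖ ^ 2 - 1))
    (hρ : ρ = (⟪u, v⟫ - α) ^ 2 / (‖u‖ ^ 2 - 1) - ‖v‖ ^ 2 + β) :
    satellitePositions (gpsSolutions s t) ∩ {x | ∃ l : ℝ, x = v + l • u} =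
      {v - μ • u + (‖u‖⁻¹ * √(ρ / (‖u‖ ^ 2 - 1))) • u,
        v - μ • u - (‖u‖⁻¹ * √(ρ / (‖u‖ ^ 2 - 1))) • u} := by
  have hD : ‖u‖ ^ 2 - 1 ≠ 0 :=
    sub_ne_zero.mpr fun h ↦ hu_one ((pow_eq_one_iff_of_nonneg (norm_nonneg u) two_ne_zero).mp h)
  have hμ' : μ * (‖u‖ ^ 2 - 1) = ⟪u, v⟫ - α := by rw [hμ, div_mul_cancel₀ _ hD]
  have hρ' : ρ = μ ^ 2 * (‖u‖ ^ 2 - 1) - ‖v‖ ^ 2 + β := by rw [hρ, hμ]; field_simp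
  obtain ⟨_, i, rfl⟩ := (affineSpan_nonempty ℝ).mp ⟨v, hv⟩
  rw [gpsSolutions_eq_gpsQuadric hu hα hv hβ hμ' hρ'] at hX ⊢
  obtain ⟨p, hp⟩ := hX.nonempty
  have hnonneg : 0 ≤ ρ / (‖u‖ ^ 2 - 1) := div_nonneg_of_sq_add_eq_of_neg_sq_add_eq hp.2
    (neg_norm_sq_add_eq_of_satellite (hα i) (hβ i) hμ' hρ')
  have hadd (k : ℝ) : v - μ • u + k • u = v + (-μ + k) • u := by module
  have hsub (k : ℝ) : v - μ • u - k • u = v + (-μ - k) • u := by module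
  rw [hadd, hsub, satellitePositions_gpsQuadric_inter_line hu hu_zero hD hnonneg hX]

theorem stmt_9 {n m : ℕ} [NeZero m] (hn : 1 ≤ n) (hm : m ≤ n + 1)
    (s : Fin m → EuclideanSpace ℝ (Fin n)) (t : Fin m → ℝ)
    (hindep : AffineIndependent ℝ s)
    (u v : EuclideanSpace ℝ (Fin n)) (α β : ℝ)
    (hu : u ∈ Submodule.span ℝ (Set.range fun i => s i - s 0))
    (hα : ∀ i, ⟪u, s i⟫ - α = t i)
    (hv : v ∈ affineSpan ℝ (Set.range s))
    (hβ : ∀ i, 2 * ⟪s i, v⟫ - β = ‖s i‖ ^ 2 - t i ^ 2)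
    (X : Set (ℝ × EuclideanSpace ℝ (Fin n)))
    (hX : X = {p : ℝ × EuclideanSpace ℝ (Fin n) | ∀ i, ‖s i - p.2‖ ^ 2 = (t i - p.1) ^ 2})
    (S : Set (ℝ × EuclideanSpace ℝ (Fin n)))
    (hS : S = {q : ℝ × EuclideanSpace ℝ (Fin n) | ∀ p ∈ X, ‖q.2 - p.2‖ ^ 2 = (q.1 - p.1) ^ 2})
    (Qsat : Set (EuclideanSpace ℝ (Fin n)))
    (hQsat : Qsat = {x : EuclideanSpace ℝ (Fin n) | ∃ τ : ℝ, (τ, x) ∈ S})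
    (htne : ∃ i j : Fin m, t i ≠ t j)
    (hX2 : X.Nontrivial)
    (e μ ρ : ℝ) (he : e = ‖u‖) (he0 : e ≠ 0) (he1 : e ≠ 1)
    (hμ : μ = (⟪u, v⟫ - α) / (e ^ 2 - 1))
    (hρ : ρ = (⟪u, v⟫ - α) ^ 2 / (e ^ 2 - 1) - ‖v‖ ^ 2 + β)
    (c : EuclideanSpace ℝ (Fin n)) (hc : c = v - μ • u) :
    Qsat ∩ {x : EuclideanSpace ℝ (Fin n) | ∃ lam : ℝ, x = v + lam • u}
      = {c + (e⁻¹ * Real.sqrt (ρ / (e ^ 2 - 1))) • u,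
          c - (e⁻¹ * Real.sqrt (ρ / (e ^ 2 - 1))) • u} := by
  subst hX hS hQsat he hc
  exact stmt_9_general (by rwa [vectorSpan_range_eq_span_range_vsub_right ℝ s 0]) hα hv hβ hX2
    he0 he1 hμ hρ
end

section
/- Assume t₁,…,t_m are not all equal, 𝔛 has at least two elements, m > 2 or |t₁ − t₂| ≠ ‖s₁ − s₂‖, and ‖u‖ = 1. Then ⟨u,v⟩ ≠ α and 3 ≤ m ≤ n. Moreover, with λ₁ = (β − ‖v‖²)/(2(⟨u,v⟩ − α)) and λ₂ = λ₁ − (⟨u,v⟩ − α)/2, one has Q_sol = {v + y₀·u + Σ_{j=1}^k yⱼ·wⱼ : y₀,…,y_k ∈ ℝ with Σ_{j=1}^k yⱼ² + 2(⟨u,v⟩ − α)(y₀ − λ₁) = 0} and Q_sat = {v + z₀·u + Σ_{i=1}^{m−2} zᵢ·w′ᵢ : z₀,…,z_{m−2} ∈ ℝ with Σ_{i=1}^{m−2} zᵢ² − 2(⟨u,v⟩ − α)(z₀ − λ₂) = 0} (a pair of paraboloids of revolution). -/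
open scoped RealInnerProductSpace

/-!
Call two events `(t, s)` and `(b, x)` of space-time lightlike related if `‖s - x‖² = (t - b)²`.
If `u, α, v, β` linearize the events `(tᵢ, sᵢ)` and `y = x - v - b u`, then, with `c = ⟪u, v⟫ - α`,
`‖sᵢ - x‖² - (tᵢ - b)² = ‖b u + y‖² - b² + 2 c b + ‖v‖² - β - 2 ⟪sᵢ - v, y⟫`
depends on `i` only through `⟪sᵢ, y⟫`. Hence `(b, x)` is a solution iff `y ⟂ U` and the remaining
`i`-independent expression vanishes; for `‖u‖ = 1` this is a paraboloid with axis `u` when `c ≠ 0`.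
If `c = 0`, a solution forces equality in Cauchy-Schwarz for `u` and every `sᵢ - v`, so that
`U = ℝ u`.

The satellites come from the same computation: the events of the first paraboloid are linearized by
`u, ⟪u, v⟫, v - c u` and a suitable `β'`, and their positions span `ℝ u + Uᗮ`, whose complement is
`U ∩ uᗮ`.
-/

section LightlikePolar

variable {E : Type*} [NormedAddCommGroup E] [InnerProductSpace ℝ E]

/-- The events `(b, x)` in the space-time `ℝ × E` (speed of light `1`) that are lightlike related to
every event of `A`. It sends satellite events `(tᵢ, sᵢ)` to the solution set of the squared global
positioning equations, and a solution set to the set of all satellite events compatible with it. -/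
def lightlikePolar (A : Set (ℝ × E)) : Set (ℝ × E) :=
  {q | ∀ p ∈ A, ‖p.2 - q.2‖ ^ 2 = (p.1 - q.1) ^ 2}

/-- The vectors `u, v` and numbers `α, β` that turn the positioning equations of the events
`(t, s) ∈ A` into linear data: `⟪u, s⟫ - α = t` and `2 ⟪s, v⟫ - β = ‖s‖² - t²`, where `u` is a
direction and `v` a point of the affine span of the positions. -/
structure IsLinearizedBy (A : Set (ℝ × E)) (u v : E) (α β : ℝ) : Prop where
  mem_vectorSpan : u ∈ vectorSpan ℝ (Prod.snd '' A)
  mem_affineSpan : v ∈ affineSpan ℝ (Prod.snd '' A)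
  inner_sub_eq : ∀ p ∈ A, ⟪u, p.2⟫ - α = p.1
  two_mul_inner_sub_eq : ∀ p ∈ A, 2 * ⟪p.2, v⟫ - β = ‖p.2‖ ^ 2 - p.1 ^ 2

/-- The events `(b, v + b u + y)` with `y ∈ W` and `‖y‖² + 2 c (b - l) = 0`. For a unit vector `u`
orthogonal to `W` and `c ≠ 0`, their positions form a paraboloid of revolution with axis `v + ℝ u`
and apex `v + l u`, and the time `b` is the coordinate along the axis. -/
def eventParaboloid (v u : E) (W : Submodule ℝ E) (c l : ℝ) : Set (ℝ × E) :=
  {p | ∃ y ∈ W, p.2 = v + p.1 • u + y ∧ ‖y‖ ^ 2 + 2 * c * (p.1 - l) = 0}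

variable {A : Set (ℝ × E)} {u v : E} {α β : ℝ} {W : Submodule ℝ E} {c l : ℝ}

theorem mem_orthogonal_vectorSpan_iff {s : Set E} {y : E} :
    y ∈ (vectorSpan ℝ s)ᗮ ↔ ∀ p ∈ s, ∀ q ∈ s, ⟪p - q, y⟫ = 0 := by
  rw [← Submodule.span_singleton_le_iff_mem, ← Submodule.isOrtho_iff_le, Submodule.isOrtho_comm,
    vectorSpan_def, Submodule.isOrtho_span]
  simp only [Set.mem_vsub, vsub_eq_sub, Set.mem_singleton_iff]
  grind

theorem mem_span_singleton_of_norm_le_abs_inner {x : E} (hu : ‖u‖ = 1) (h : ‖x‖ ≤ |⟪u, x⟫|) :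
    x ∈ ℝ ∙ u := by
  have hu₀ : u ≠ 0 := norm_ne_zero_iff.1 (by simp [hu])
  have hcs : ‖⟪u, x⟫‖ = ‖u‖ * ‖x‖ :=
    (norm_inner_le_norm u x).antisymm (by simpa [hu] using h)
  have hmem : u = 0 ∨ x ∈ ℝ ∙ u := ((norm_inner_eq_norm_tfae ℝ u x).out 0 3).1 hcs
  exact hmem.resolve_left hu₀

theorem span_insert_le_span_singleton_iff_isEmpty {κ : Type*} {w : κ → E} (hw : Orthonormal ℝ w)
    (huw : ∀ i, ⟪u, w i⟫ = 0) :
    Submodule.span ℝ (insert u (Set.range w)) ≤ ℝ ∙ u ↔ IsEmpty κ := by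
  constructor
  · refine fun hle => ⟨fun i => hw.ne_zero i ?_⟩
    have hmem : w i ∈ ℝ ∙ u :=
      hle (Submodule.subset_span (Set.mem_insert_of_mem u (Set.mem_range_self i)))
    exact Submodule.disjoint_def.1 (ℝ ∙ u).orthogonal_disjoint _ hmem
      (Submodule.mem_orthogonal_singleton_iff_inner_right.2 (huw i))
  · intro _
    rw [Set.range_eq_empty, insert_empty_eq]

theorem span_insert_inf_orthogonal {s : Set E} (hs : ∀ x ∈ s, ⟪u, x⟫ = 0) :
    (ℝ ∙ u)ᗮ ⊓ Submodule.span ℝ (insert u s) = Submodule.span ℝ s := by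
  have hle : Submodule.span ℝ s ≤ (ℝ ∙ u)ᗮ := Submodule.span_le.2 fun x hx =>
    Submodule.mem_orthogonal_singleton_iff_inner_right.2 (hs x hx)
  rw [inf_comm, Submodule.span_insert, sup_comm, sup_inf_assoc_of_le _ hle,
    Submodule.inf_orthogonal_eq_bot, sup_bot_eq]

namespace IsLinearizedBy

theorem nonempty (h : IsLinearizedBy A u v α β) : A.Nonempty :=
  Set.image_nonempty.1 ((affineSpan_nonempty ℝ).1 ⟨v, h.mem_affineSpan⟩)

theorem snd_sub_mem_vectorSpan (h : IsLinearizedBy A u v α β) {p : ℝ × E} (hp : p ∈ A) :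
    p.2 - v ∈ vectorSpan ℝ (Prod.snd '' A) :=
  vsub_mem_vectorSpan_of_mem_affineSpan_of_mem_affineSpan
    (subset_affineSpan ℝ _ (Set.mem_image_of_mem _ hp)) h.mem_affineSpan

theorem fst_eq (h : IsLinearizedBy A u v α β) {p : ℝ × E} (hp : p ∈ A) :
    p.1 = ⟪u, p.2 - v⟫ + (⟪u, v⟫ - α) := by
  rw [inner_sub_right, ← h.inner_sub_eq p hp]
  ring

theorem norm_snd_sub_sq (h : IsLinearizedBy A u v α β) {p : ℝ × E} (hp : p ∈ A) :
    ‖p.2 - v‖ ^ 2 = p.1 ^ 2 + ‖v‖ ^ 2 - β := by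
  rw [norm_sub_sq_real]
  linear_combination -h.two_mul_inner_sub_eq p hp

theorem lightlike_defect (h : IsLinearizedBy A u v α β) {p : ℝ × E} (hp : p ∈ A) (b : ℝ) (y : E) :
    ‖p.2 - (v + b • u + y)‖ ^ 2 - (p.1 - b) ^ 2 =
      ‖b • u + y‖ ^ 2 - b ^ 2 + 2 * (⟪u, v⟫ - α) * b + ‖v‖ ^ 2 - β - 2 * ⟪p.2 - v, y⟫ := by
  have hsplit : p.2 - (v + b • u + y) = (p.2 - v) - (b • u + y) := by abel
  rw [hsplit, norm_sub_sq_real, h.norm_snd_sub_sq hp, inner_add_right, real_inner_smul_right,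
    real_inner_comm u]
  linear_combination 2 * b * h.fst_eq hp

theorem sub_mem_orthogonal_of_mem_lightlikePolar (h : IsLinearizedBy A u v α β) {q : ℝ × E}
    (hq : q ∈ lightlikePolar A) : q.2 - v - q.1 • u ∈ (vectorSpan ℝ (Prod.snd '' A))ᗮ := by
  have hdefect (p) (hp : p ∈ A) := h.lightlike_defect hp q.1 (q.2 - v - q.1 • u)
  have hposition : v + q.1 • u + (q.2 - v - q.1 • u) = q.2 := by abel
  simp only [hposition] at hdefect
  rw [mem_orthogonal_vectorSpan_iff, Set.forall_mem_image]
  intro p hp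
  rw [Set.forall_mem_image]
  intro p' hp'
  have hsplit : p.2 - p'.2 = (p.2 - v) - (p'.2 - v) := by abel
  rw [hsplit, inner_sub_left]
  linarith [hdefect p hp, hdefect p' hp', hq p hp, hq p' hp']

theorem mem_lightlikePolar_iff (h : IsLinearizedBy A u v α β) {q : ℝ × E} :
    q ∈ lightlikePolar A ↔ ∃ y ∈ (vectorSpan ℝ (Prod.snd '' A))ᗮ, q.2 = v + q.1 • u + y ∧
      ‖y‖ ^ 2 + (‖u‖ ^ 2 - 1) * q.1 ^ 2 + 2 * (⟪u, v⟫ - α) * q.1 = β - ‖v‖ ^ 2 := by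
  have hdefect {y : E} (hy : y ∈ (vectorSpan ℝ (Prod.snd '' A))ᗮ) (hq : q.2 = v + q.1 • u + y)
      {p : ℝ × E} (hp : p ∈ A) : ‖p.2 - q.2‖ ^ 2 - (p.1 - q.1) ^ 2 =
        ‖y‖ ^ 2 + (‖u‖ ^ 2 - 1) * q.1 ^ 2 + 2 * (⟪u, v⟫ - α) * q.1 - (β - ‖v‖ ^ 2) := by
    rw [hq, h.lightlike_defect hp, norm_add_sq_real, real_inner_smul_left, norm_smul, mul_pow,
      Real.norm_eq_abs, sq_abs, Submodule.inner_right_of_mem_orthogonal h.mem_vectorSpan hy,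
      Submodule.inner_right_of_mem_orthogonal (h.snd_sub_mem_vectorSpan hp) hy]
    ring
  constructor
  · intro hq
    obtain ⟨p, hp⟩ := h.nonempty
    have hy := h.sub_mem_orthogonal_of_mem_lightlikePolar hq
    have hposition : q.2 = v + q.1 • u + (q.2 - v - q.1 • u) := by abel
    exact ⟨_, hy, hposition, by linarith [hdefect hy hposition hp, hq p hp]⟩
  · rintro ⟨y, hy, hposition, hnorm⟩ p hp
    linarith [hdefect hy hposition hp]

theorem lightlikePolar_eq (h : IsLinearizedBy A u v α β) (hu : ‖u‖ = 1) (hc : ⟪u, v⟫ ≠ α) :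
    lightlikePolar A = eventParaboloid v u (vectorSpan ℝ (Prod.snd '' A))ᗮ (⟪u, v⟫ - α)
      ((β - ‖v‖ ^ 2) / (2 * (⟪u, v⟫ - α))) := by
  have hc' : 2 * (⟪u, v⟫ - α) ≠ 0 := mul_ne_zero two_ne_zero (sub_ne_zero.2 hc)
  ext q
  rw [h.mem_lightlikePolar_iff, hu, eventParaboloid, Set.mem_ofPred_eq]
  refine exists_congr fun y => and_congr_right fun _ => and_congr_right fun _ => ?_
  rw [mul_sub (2 * _), mul_div_cancel₀ _ hc']
  constructor <;> intro hnorm <;> linarith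

theorem vectorSpan_le_span_singleton (h : IsLinearizedBy A u v α β) (hu : ‖u‖ = 1)
    (hA : (lightlikePolar A).Nonempty) (hc : ⟪u, v⟫ = α) :
    vectorSpan ℝ (Prod.snd '' A) ≤ ℝ ∙ u := by
  obtain ⟨q, hq⟩ := hA
  obtain ⟨y, -, -, hnorm⟩ := h.mem_lightlikePolar_iff.1 hq
  have hβ : 0 ≤ β - ‖v‖ ^ 2 := by
    rw [← hnorm, hu, hc]
    simp
  have hmem {p : ℝ × E} (hp : p ∈ A) : p.2 - v ∈ ℝ ∙ u := by
    refine mem_span_singleton_of_norm_le_abs_inner hu (abs_le_of_sq_le_sq' ?_ ?_).2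
    · have hfst := h.fst_eq hp
      rw [hc, sub_self, add_zero] at hfst
      rw [sq_abs, ← hfst, h.norm_snd_sub_sq hp]
      linarith
    · exact abs_nonneg _
  rw [vectorSpan_def, Submodule.span_le]
  rintro _ ⟨_, ⟨p, hp, rfl⟩, _, ⟨p', hp', rfl⟩, rfl⟩
  simpa using Submodule.sub_mem _ (hmem hp) (hmem hp')

theorem abs_fst_sub_eq_norm_snd_sub (h : IsLinearizedBy A u v α β) (hu : ‖u‖ = 1)
    (hA : vectorSpan ℝ (Prod.snd '' A) ≤ ℝ ∙ u) {p q : ℝ × E} (hp : p ∈ A) (hq : q ∈ A) :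
    |p.1 - q.1| = ‖p.2 - q.2‖ := by
  obtain ⟨r, hr⟩ := Submodule.mem_span_singleton.1 <| hA <| vsub_mem_vectorSpan ℝ
    (Set.mem_image_of_mem Prod.snd hp) (Set.mem_image_of_mem Prod.snd hq)
  have hfst : p.1 - q.1 = ⟪u, p.2 - q.2⟫ := by
    rw [← h.inner_sub_eq p hp, ← h.inner_sub_eq q hq, inner_sub_right]
    ring
  rw [vsub_eq_sub] at hr
  rw [hfst, ← hr, real_inner_smul_self_right, norm_smul, hu, Real.norm_eq_abs]
  simp

end IsLinearizedBy

theorem mk_mem_eventParaboloid (hc : c ≠ 0) {y : E} (hy : y ∈ W) :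
    (l - ‖y‖ ^ 2 / (2 * c), v + (l - ‖y‖ ^ 2 / (2 * c)) • u + y) ∈ eventParaboloid v u W c l :=
  ⟨y, hy, rfl, by field_simp; ring⟩

theorem vectorSpan_snd_image_eventParaboloid (hc : c ≠ 0) (hW : W ≠ ⊥) :
    vectorSpan ℝ (Prod.snd '' eventParaboloid v u W c l) = ℝ ∙ u ⊔ W := by
  have hpoint {y : E} (hy : y ∈ W) : v + (l - ‖y‖ ^ 2 / (2 * c)) • u + y ∈
      Prod.snd '' eventParaboloid v u W c l :=
    Set.mem_image_of_mem Prod.snd (mk_mem_eventParaboloid hc hy)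
  apply le_antisymm
  · rw [vectorSpan_def, Submodule.span_le]
    rintro _ ⟨_, ⟨p, ⟨y, hy, hp, -⟩, rfl⟩, _, ⟨q, ⟨z, hz, hq, -⟩, rfl⟩, rfl⟩
    refine Submodule.mem_sup.2 ⟨(p.1 - q.1) • u, Submodule.smul_mem _ _
      (Submodule.mem_span_singleton_self u), y - z, W.sub_mem hy hz, ?_⟩
    simp only [vsub_eq_sub, hp, hq]
    module
  · have hle : W ≤ vectorSpan ℝ (Prod.snd '' eventParaboloid v u W c l) := by
      intro y hy
      have hdiff := vsub_mem_vectorSpan ℝ (hpoint hy) (hpoint (W.neg_mem hy))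
      have htwo : (2 : ℝ) • y ∈ vectorSpan ℝ (Prod.snd '' eventParaboloid v u W c l) := by
        convert hdiff using 1
        rw [norm_neg, vsub_eq_sub]
        module
      exact (Submodule.smul_mem_iff _ two_ne_zero).1 htwo
    refine sup_le ((Submodule.span_singleton_le_iff_mem _ _).2 ?_) hle
    obtain ⟨y, hy, hy₀⟩ := W.exists_mem_ne_zero_of_ne_bot hW
    have hdiff := Submodule.sub_mem _
      (vsub_mem_vectorSpan ℝ (hpoint W.zero_mem) (hpoint hy)) (Submodule.neg_mem _ (hle hy))
    have hscale : ‖y‖ ^ 2 / (2 * c) ≠ 0 := by positivity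
    refine (Submodule.smul_mem_iff _ hscale).1 ?_
    convert hdiff using 1
    rw [norm_zero, vsub_eq_sub]
    module

theorem isLinearizedBy_eventParaboloid (hu : ‖u‖ = 1) (huW : u ∈ Wᗮ) (hc : c ≠ 0) (hW : W ≠ ⊥) :
    IsLinearizedBy (eventParaboloid v u W c l) u (v - c • u) ⟪u, v⟫
      (‖v‖ ^ 2 - 2 * c * ⟪u, v⟫ - 2 * c * l) where
  mem_vectorSpan := by
    rw [vectorSpan_snd_image_eventParaboloid hc hW]
    exact Submodule.mem_sup_left (Submodule.mem_span_singleton_self u)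
  mem_affineSpan := by
    have hapex : v + l • u ∈ Prod.snd '' eventParaboloid v u W c l := by
      simpa using Set.mem_image_of_mem Prod.snd
        (mk_mem_eventParaboloid (v := v) (u := u) (l := l) hc W.zero_mem)
    have hdir : (-(c + l)) • u ∈ vectorSpan ℝ (Prod.snd '' eventParaboloid v u W c l) := by
      rw [vectorSpan_snd_image_eventParaboloid hc hW]
      exact Submodule.mem_sup_left (Submodule.smul_mem _ _ (Submodule.mem_span_singleton_self u))
    convert vadd_mem_affineSpan_of_mem_affineSpan_of_mem_vectorSpan
      (subset_affineSpan ℝ _ hapex) hdir using 1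
    rw [vadd_eq_add]
    module
  inner_sub_eq := by
    rintro p ⟨y, hy, hp, -⟩
    rw [hp, inner_add_right, inner_add_right, real_inner_smul_self_right, hu,
      Submodule.inner_left_of_mem_orthogonal hy huW]
    ring
  two_mul_inner_sub_eq := by
    rintro p ⟨y, hy, hp, hnorm⟩
    have huy : ⟪u, y⟫ = 0 := Submodule.inner_left_of_mem_orthogonal hy huW
    rw [hp, norm_add_sq_real, norm_add_sq_real]
    simp only [inner_add_left, inner_sub_right, real_inner_smul_left, real_inner_smul_right,
      real_inner_self_eq_norm_sq, norm_smul, hu, huy, real_inner_comm u v, real_inner_comm v y,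
      real_inner_comm u y, Real.norm_eq_abs, mul_one, sq_abs]
    linear_combination -hnorm

theorem lightlikePolar_eventParaboloid (hu : ‖u‖ = 1) (huW : u ∈ Wᗮ) (hc : c ≠ 0) (hW : W ≠ ⊥) :
    lightlikePolar (eventParaboloid v u W c l) =
      eventParaboloid (v - c • u) u ((ℝ ∙ u)ᗮ ⊓ Wᗮ) (-c) (l + c / 2) := by
  have hinner : ⟪u, v - c • u⟫ - ⟪u, v⟫ = -c := by
    rw [inner_sub_right, real_inner_smul_self_right, hu]
    ring
  have hnorm : ‖v - c • u‖ ^ 2 = ‖v‖ ^ 2 - 2 * c * ⟪u, v⟫ + c ^ 2 := by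
    rw [norm_sub_sq_real, real_inner_smul_right, norm_smul, hu, Real.norm_eq_abs, mul_one, sq_abs,
      real_inner_comm u v]
    ring
  have hlin := isLinearizedBy_eventParaboloid (v := v) (l := l) hu huW hc hW
  have hne : ⟪u, v - c • u⟫ ≠ ⟪u, v⟫ := sub_ne_zero.1 (hinner ▸ neg_ne_zero.2 hc)
  rw [hlin.lightlikePolar_eq hu hne, hinner, hnorm, vectorSpan_snd_image_eventParaboloid hc hW,
    Submodule.inf_orthogonal]
  congr 1
  field_simp
  ring

theorem eventParaboloid_bot_subsingleton (hc : c ≠ 0) :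
    (eventParaboloid v u ⊥ c l).Subsingleton := by
  have happex {p : ℝ × E} (hp : p ∈ eventParaboloid v u ⊥ c l) : p = (l, v + l • u) := by
    obtain ⟨y, hy, hposition, hnorm⟩ := hp
    rw [Submodule.mem_bot] at hy
    have hl : p.1 = l := by simpa [hy, hc, sub_eq_zero] using hnorm
    exact Prod.ext hl (by simpa [hy, hl] using hposition)
  exact fun p hp q hq => (happex hp).trans (happex hq).symm

theorem IsLinearizedBy.orthogonal_vectorSpan_ne_bot (h : IsLinearizedBy A u v α β) (hu : ‖u‖ = 1)
    (hc : ⟪u, v⟫ ≠ α) (hA : (lightlikePolar A).Nontrivial) :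
    (vectorSpan ℝ (Prod.snd '' A))ᗮ ≠ ⊥ := by
  intro hbot
  rw [h.lightlikePolar_eq hu hc, hbot] at hA
  exact hA.not_subsingleton (eventParaboloid_bot_subsingleton (sub_ne_zero.2 hc))

theorem IsLinearizedBy.lightlikePolar_lightlikePolar_eq
    [(vectorSpan ℝ (Prod.snd '' A)).HasOrthogonalProjection] (h : IsLinearizedBy A u v α β)
    (hu : ‖u‖ = 1) (hc : ⟪u, v⟫ ≠ α) (hA : (vectorSpan ℝ (Prod.snd '' A))ᗮ ≠ ⊥) :
    lightlikePolar (lightlikePolar A) = eventParaboloid (v - (⟪u, v⟫ - α) • u) u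
      ((ℝ ∙ u)ᗮ ⊓ vectorSpan ℝ (Prod.snd '' A)) (-(⟪u, v⟫ - α))
      ((β - ‖v‖ ^ 2) / (2 * (⟪u, v⟫ - α)) + (⟪u, v⟫ - α) / 2) := by
  have huA := Submodule.le_orthogonal_orthogonal _ h.mem_vectorSpan
  rw [h.lightlikePolar_eq hu hc, lightlikePolar_eventParaboloid hu huA (sub_ne_zero.2 hc) hA,
    Submodule.orthogonal_orthogonal]

theorem exists_mem_eventParaboloid_sub_smul_iff (a : ℝ) {x : E} :
    (∃ b, (b, x) ∈ eventParaboloid (v - a • u) u W c l) ↔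
      ∃ b, (b, x) ∈ eventParaboloid v u W c (l - a) := by
  refine (Equiv.subRight a).exists_congr fun b => exists_congr fun y => and_congr_right fun _ => ?_
  simp only [Equiv.subRight_apply]
  rw [show v - a • u + b • u + y = v + (b - a) • u + y by module, sub_sub_sub_cancel_right]

theorem exists_mem_eventParaboloid_iff_of_orthonormal {κ : Type*} [Fintype κ] {w : κ → E}
    (hw : Orthonormal ℝ w) (hspan : Submodule.span ℝ (Set.range w) = W) {x : E} :
    (∃ b, (b, x) ∈ eventParaboloid v u W c l) ↔ ∃ (b : ℝ) (y : κ → ℝ),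
      x = v + b • u + ∑ j, y j • w j ∧ ∑ j, y j ^ 2 + 2 * c * (b - l) = 0 := by
  have hnorm (y : κ → ℝ) : ‖∑ j, y j • w j‖ ^ 2 = ∑ j, y j ^ 2 := by
    rw [← real_inner_self_eq_norm_sq, hw.inner_sum]
    simp [sq]
  simp only [eventParaboloid, Set.mem_ofPred_eq, ← hspan, Submodule.mem_span_range_iff_exists_fun,
    exists_exists_eq_and, hnorm]

theorem stmt_10_general {κ κ' : Type*} [Fintype κ] [Fintype κ'] {w : κ → E} {w' : κ' → E}
    (h : IsLinearizedBy A u v α β) (hu : ‖u‖ = 1) (hw : Orthonormal ℝ w)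
    (hwspan : Submodule.span ℝ (Set.range w) = (vectorSpan ℝ (Prod.snd '' A))ᗮ)
    (hw' : Orthonormal ℝ w') (hw'u : ∀ i, ⟪u, w' i⟫ = 0)
    (hw'span : Submodule.span ℝ (insert u (Set.range w')) = vectorSpan ℝ (Prod.snd '' A))
    (hX : (lightlikePolar A).Nontrivial)
    (hcase : Nonempty κ' ∨ ∃ p ∈ A, ∃ q ∈ A, |p.1 - q.1| ≠ ‖p.2 - q.2‖)
    (hc : c = ⟪u, v⟫ - α) (hl : l = (β - ‖v‖ ^ 2) / (2 * c)) :
    ⟪u, v⟫ ≠ α ∧ Nonempty κ' ∧ Nonempty κ ∧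
    {x | ∃ b, (b, x) ∈ lightlikePolar A} = {x | ∃ (y₀ : ℝ) (y : κ → ℝ),
      x = v + y₀ • u + ∑ j, y j • w j ∧ (∑ j, y j ^ 2) + 2 * c * (y₀ - l) = 0} ∧
    {x | ∃ t, (t, x) ∈ lightlikePolar (lightlikePolar A)} = {x | ∃ (z₀ : ℝ) (z : κ' → ℝ),
      x = v + z₀ • u + ∑ i, z i • w' i ∧
      (∑ i, z i ^ 2) - 2 * c * (z₀ - (l - c / 2)) = 0} := by
  have hline := span_insert_le_span_singleton_iff_isEmpty hw' hw'u
  have hκ' : Nonempty κ' := hcase.elim id fun ⟨p, hp, q, hq, hpq⟩ => not_isEmpty_iff.1 fun hempty =>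
    hpq (h.abs_fst_sub_eq_norm_snd_sub hu (hw'span ▸ hline.2 hempty) hp hq)
  have hne : ⟪u, v⟫ ≠ α := fun heq => not_isEmpty_of_nonempty κ' <|
    hline.1 (hw'span ▸ h.vectorSpan_le_span_singleton hu hX.nonempty heq)
  have hperp : (vectorSpan ℝ (Prod.snd '' A))ᗮ ≠ ⊥ := h.orthogonal_vectorSpan_ne_bot hu hne hX
  have hκ : Nonempty κ := by
    by_contra! hempty
    exact hperp (by rw [← hwspan, Set.range_eq_empty, Submodule.span_empty])
  have hfinite : FiniteDimensional ℝ (vectorSpan ℝ (Prod.snd '' A)) :=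
    hw'span ▸ FiniteDimensional.span_of_finite ℝ (Set.toFinite _)
  have hspan' := span_insert_inf_orthogonal (Set.forall_mem_range.2 hw'u)
  subst hl hc
  refine ⟨hne, hκ', hκ, ?_, ?_⟩ <;> ext x
  · rw [Set.mem_ofPred_eq, h.lightlikePolar_eq hu hne,
      exists_mem_eventParaboloid_iff_of_orthonormal hw hwspan, Set.mem_ofPred_eq]
  · rw [Set.mem_ofPred_eq, h.lightlikePolar_lightlikePolar_eq hu hne hperp,
      exists_mem_eventParaboloid_sub_smul_iff, ← hw'span,
      exists_mem_eventParaboloid_iff_of_orthonormal hw' hspan'.symm, add_sub_assoc,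
      half_sub, ← sub_eq_add_neg, Set.mem_ofPred_eq]
    simp only [mul_neg, neg_mul, ← sub_eq_add_neg]

theorem vectorSpan_snd_image_range_prodMk {ι : Type*} (t : ι → ℝ) (s : ι → E) (i₀ : ι) :
    vectorSpan ℝ (Prod.snd '' Set.range fun i => (t i, s i)) =
      Submodule.span ℝ (Set.range fun i => s i - s i₀) := by
  rw [← Set.range_comp]
  exact vectorSpan_range_eq_span_range_vsub_right ℝ s i₀

theorem isLinearizedBy_range_prodMk {ι : Type*} {t : ι → ℝ} {s : ι → E} (i₀ : ι)
    (hu : u ∈ Submodule.span ℝ (Set.range fun i => s i - s i₀))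
    (hv : v ∈ affineSpan ℝ (Set.range s)) (hα : ∀ i, ⟪u, s i⟫ - α = t i)
    (hβ : ∀ i, 2 * ⟪s i, v⟫ - β = ‖s i‖ ^ 2 - t i ^ 2) :
    IsLinearizedBy (Set.range fun i => (t i, s i)) u v α β where
  mem_vectorSpan := by rwa [vectorSpan_snd_image_range_prodMk t s i₀]
  mem_affineSpan := by rwa [← Set.range_comp]
  inner_sub_eq := Set.forall_mem_range.2 hα
  two_mul_inner_sub_eq := Set.forall_mem_range.2 hβ

end LightlikePolar

theorem stmt_10 {n m : ℕ} [NeZero m] (hn : 1 ≤ n) (hm : m ≤ n + 1)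
    (s : Fin m → EuclideanSpace ℝ (Fin n)) (t : Fin m → ℝ)
    (hindep : AffineIndependent ℝ s)
    (u v : EuclideanSpace ℝ (Fin n)) (α β : ℝ)
    (hu : u ∈ Submodule.span ℝ (Set.range fun i => s i - s 0))
    (hα : ∀ i, ⟪u, s i⟫ - α = t i)
    (hv : v ∈ affineSpan ℝ (Set.range s))
    (hβ : ∀ i, 2 * ⟪s i, v⟫ - β = ‖s i‖ ^ 2 - t i ^ 2)
    {k : ℕ} (hk : k = n - (m - 1))
    (w : Fin k → EuclideanSpace ℝ (Fin n)) (hw : Orthonormal ℝ w)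
    (hwspan : Submodule.span ℝ (Set.range w)
      = (Submodule.span ℝ (Set.range fun i => s i - s 0))ᗮ)
    (X : Set (ℝ × EuclideanSpace ℝ (Fin n)))
    (hX : X = {p : ℝ × EuclideanSpace ℝ (Fin n) | ∀ i, ‖s i - p.2‖ ^ 2 = (t i - p.1) ^ 2})
    (S : Set (ℝ × EuclideanSpace ℝ (Fin n)))
    (hS : S = {q : ℝ × EuclideanSpace ℝ (Fin n) | ∀ p ∈ X, ‖q.2 - p.2‖ ^ 2 = (q.1 - p.1) ^ 2})
    (Qsol : Set (EuclideanSpace ℝ (Fin n)))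
    (hQsol : Qsol = {x : EuclideanSpace ℝ (Fin n) | ∃ b : ℝ, (b, x) ∈ X})
    (Qsat : Set (EuclideanSpace ℝ (Fin n)))
    (hQsat : Qsat = {x : EuclideanSpace ℝ (Fin n) | ∃ τ : ℝ, (τ, x) ∈ S})
    (htne : ∃ i j : Fin m, t i ≠ t j)
    (hX2 : X.Nontrivial)
    (hcase : 2 < m ∨ ∀ i j : Fin m, i ≠ j → |t i - t j| ≠ ‖s i - s j‖)
    (hu0 : u ≠ 0)
    (w' : Fin (m - 2) → EuclideanSpace ℝ (Fin n)) (hw' : Orthonormal ℝ w')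
    (hw'u : ∀ i, ⟪u, w' i⟫ = 0)
    (hw'span : Submodule.span ℝ (insert u (Set.range w'))
      = Submodule.span ℝ (Set.range fun i => s i - s 0))
    (heq : ‖u‖ = 1)
    (lam₁ lam₂ : ℝ)
    (hlam₁ : lam₁ = (β - ‖v‖ ^ 2) / (2 * (⟪u, v⟫ - α)))
    (hlam₂ : lam₂ = lam₁ - (⟪u, v⟫ - α) / 2) :
    ⟪u, v⟫ ≠ α ∧ 3 ≤ m ∧ m ≤ n ∧
    Qsol = {x : EuclideanSpace ℝ (Fin n) | ∃ (y₀ : ℝ) (y : Fin k → ℝ),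
      x = v + y₀ • u + ∑ j, y j • w j ∧
      (∑ j, y j ^ 2) + 2 * (⟪u, v⟫ - α) * (y₀ - lam₁) = 0} ∧
    Qsat = {x : EuclideanSpace ℝ (Fin n) | ∃ (z₀ : ℝ) (z : Fin (m - 2) → ℝ),
      x = v + z₀ • u + ∑ i, z i • w' i ∧
      (∑ i, z i ^ 2) - 2 * (⟪u, v⟫ - α) * (z₀ - lam₂) = 0} := by
  have hU := vectorSpan_snd_image_range_prodMk t s 0
  have hlin := isLinearizedBy_range_prodMk 0 hu hv hα hβ
  have hXpolar : X = lightlikePolar (Set.range fun i => (t i, s i)) := by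
    simp only [hX, lightlikePolar, Set.forall_mem_range]
  have hSpolar : S = lightlikePolar X := by
    simp only [hS, lightlikePolar, norm_sub_rev, sub_sq_comm]
  have hspread : Nonempty (Fin (m - 2)) ∨ ∃ p ∈ Set.range fun i => (t i, s i),
      ∃ q ∈ Set.range fun i => (t i, s i), |p.1 - q.1| ≠ ‖p.2 - q.2‖ := by
    refine hcase.imp (fun hm₂ => Fin.pos_iff_nonempty.1 (Nat.sub_pos_of_lt hm₂)) fun hlight => ?_
    obtain ⟨i, j, hij⟩ := htne
    exact ⟨_, ⟨i, rfl⟩, _, ⟨j, rfl⟩, hlight i j (ne_of_apply_ne t hij)⟩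
  obtain ⟨hc, hw'ne, hwne, hsol, hsat⟩ := stmt_10_general hlin heq hw (hU ▸ hwspan) hw' hw'u
    (hU ▸ hw'span) (hXpolar ▸ hX2) hspread rfl hlam₁
  rw [← Fin.pos_iff_nonempty] at hw'ne hwne
  rw [← hXpolar, ← hQsol] at hsol
  rw [← hXpolar, ← hSpolar, ← hQsat, ← hlam₂] at hsat
  exact ⟨hc, by omega, by omega, hsol, hsat⟩
end

section
/- Assume t₁,…,t_m are not all equal, 𝔛 has at least two elements, and m > 2 or |t₁ − t₂| ≠ ‖s₁ − s₂‖. Then the affine span of Q_sol equals v + (ℝ·u + U⊥) (an affine subspace of dimension k+1), the affine span of Q_sat equals the affine span of s₁,…,s_m, which equals v + U (an affine subspace of dimension m−1), and the intersection (v + ℝ·u + U⊥) ∩ (v + U) is exactly the line {v + λ·u : λ ∈ ℝ}. -/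
open scoped RealInnerProductSpace
open scoped Topology

/-!
The solutions at time `b` are the points `v + b • u + w` with `w ⟂ U` and `‖w‖² = -q b`, where `q`
is an explicit quadratic polynomial. If `q` were nonnegative, two solutions would make it vanish
identically; then `‖u‖ = 1` and `sᵢ = v + tᵢ • u`, which puts the `sᵢ` on a line with all
`(tᵢ, sᵢ)` lightlike separated. So `q b < 0` for some `b`, and the solutions at time `b` form a
sphere in `v + b • u + Uᗮ`. The differences of its points span `Uᗮ`, solutions at two different
times yield the direction `u`, and every position equidistant from the sphere lies in `v + Uᗮᗮ`.
-/

theorem quadratic_eq_zero_of_nonneg_of_two_roots {K : Type*} [Field K] [LinearOrder K]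
    [IsStrictOrderedRing K] {a b c x y : K} (hxy : x ≠ y)
    (hnonneg : ∀ z, 0 ≤ a * z ^ 2 + b * z + c)
    (hx : a * x ^ 2 + b * x + c = 0) (hy : a * y ^ 2 + b * y + c = 0) (z : K) :
    a * z ^ 2 + b * z + c = 0 := by
  have hsub : x - y ≠ 0 := sub_ne_zero.2 hxy
  have hpos : 0 < (x - y) ^ 2 := by positivity
  have hb : b = -a * (x + y) :=
    mul_left_cancel₀ hsub (by linear_combination hx - hy)
  -- `q z = a * (z - x) * (z - y)` changes sign unless `a = 0`.
  have hle : a * (x - y) ^ 2 ≤ 0 := by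
    have := hnonneg ((x + y) / 2)
    subst hb
    linarith
  have hge : 0 ≤ a * (x - y) ^ 2 := by
    have := hnonneg (2 * x - y)
    subst hb
    linarith
  have ha : a = 0 := (mul_eq_zero.1 (le_antisymm hle hge)).resolve_right hpos.ne'
  subst ha hb
  linear_combination hx

theorem le_of_forall_mem_of_norm_eq {V : Type*} [NormedAddCommGroup V] [NormedSpace ℝ V]
    {W D : Submodule ℝ V} {r : ℝ} (hr : 0 < r) (h : ∀ w ∈ W, ‖w‖ = r → w ∈ D) : W ≤ D := by
  intro w hw
  rcases eq_or_ne w 0 with rfl | hw0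
  · exact D.zero_mem
  have hnorm : 0 < ‖w‖ := norm_pos_iff.2 hw0
  have hscaled : ‖(r / ‖w‖) • w‖ = r := by
    rw [norm_smul, Real.norm_of_nonneg (by positivity), div_mul_cancel₀ _ hnorm.ne']
  exact (D.smul_mem_iff (div_pos hr hnorm).ne').1 (h _ (W.smul_mem _ hw) hscaled)

section AffineSubspace

variable {k V : Type*} [Ring k] [AddCommGroup V] [Module k V]

theorem coe_mk'_eq_setOf (v : V) (W : Submodule k V) :
    (AffineSubspace.mk' v W : Set V) = {x | ∃ y ∈ W, x = v + y} := by
  ext x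
  simp only [SetLike.mem_coe, AffineSubspace.mem_mk', vsub_eq_sub, Set.mem_ofPred_eq]
  exact ⟨fun h => ⟨x - v, h, by abel⟩, by rintro ⟨y, hy, rfl⟩; simpa using hy⟩

theorem coe_mk'_span_singleton (v u : V) :
    (AffineSubspace.mk' v (Submodule.span k {u}) : Set V) = {x | ∃ r : k, x = v + r • u} := by
  ext x
  simp [coe_mk'_eq_setOf, Submodule.mem_span_singleton]

theorem mk'_inf_mk' (v : V) (W₁ W₂ : Submodule k V) :
    AffineSubspace.mk' v W₁ ⊓ AffineSubspace.mk' v W₂ = AffineSubspace.mk' v (W₁ ⊓ W₂) := by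
  ext x
  simp [AffineSubspace.mem_inf_iff, AffineSubspace.mem_mk']

end AffineSubspace

section Orthogonal

variable {V : Type*} [NormedAddCommGroup V] [InnerProductSpace ℝ V] {U : Submodule ℝ V} {u : V}

theorem mem_orthogonal_vectorSpan_range_iff {ι : Type*} {s : ι → V} {w : V} :
    w ∈ (vectorSpan ℝ (Set.range s))ᗮ ↔ ∀ i j, ⟪s i - s j, w⟫ = 0 := by
  rw [← Submodule.span_singleton_le_iff_mem, ← Submodule.isOrtho_iff_le, vectorSpan_def,
    Submodule.isOrtho_span]
  simp only [Set.mem_singleton_iff, forall_eq, Set.mem_vsub, Set.exists_range_iff, vsub_eq_sub,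
    real_inner_comm w]
  exact ⟨fun h i j => h ⟨i, j, rfl⟩, by rintro h _ ⟨i, j, rfl⟩; exact h i j⟩

theorem span_singleton_sup_orthogonal_inf (hu : u ∈ U) :
    (Submodule.span ℝ {u} ⊔ Uᗮ) ⊓ U = Submodule.span ℝ {u} := by
  rw [sup_inf_assoc_of_le _ ((Submodule.span_singleton_le_iff_mem _ _).2 hu), inf_comm,
    U.inf_orthogonal_eq_bot, sup_bot_eq]

theorem rank_span_singleton_sup_orthogonal (hu : u ∈ U) (hu0 : u ≠ 0) :
    Module.rank ℝ ↥(Submodule.span ℝ {u} ⊔ Uᗮ) = Module.rank ℝ Uᗮ + 1 := by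
  have hdisj : Submodule.span ℝ {u} ⊓ Uᗮ = ⊥ :=
    (U.orthogonal_disjoint.mono_left ((Submodule.span_singleton_le_iff_mem _ _).2 hu)).eq_bot
  have hrank := Submodule.rank_sup_add_rank_inf_eq (Submodule.span ℝ {u}) Uᗮ
  rwa [hdisj, rank_bot, add_zero,
    Module.rank_eq_one_iff_finrank_eq_one.2 (finrank_span_singleton hu0), add_comm 1] at hrank

end Orthogonal

section GlobalPositioning

variable {ι V : Type*}

/-- The projection of a set of space-time points to space, giving `Q_sol` from the solution
set and `Q_sat` from the satellite set. -/
def positions (X : Set (ℝ × V)) : Set V :=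
  {x | ∃ b : ℝ, (b, x) ∈ X}

theorem mem_positions {X : Set (ℝ × V)} {b : ℝ} {x : V} (hx : (b, x) ∈ X) : x ∈ positions X :=
  ⟨b, hx⟩

variable [NormedAddCommGroup V]

/-- The set `𝔛` of solutions `(b, x)` of the squared global positioning equations for satellites
at the positions `s i` with time stamps `t i`. -/
def solutionSet (s : ι → V) (t : ι → ℝ) : Set (ℝ × V) :=
  {p | ∀ i, ‖s i - p.2‖ ^ 2 = (t i - p.1) ^ 2}

/-- The set `𝒮` of all satellites `(τ, y)` whose equation is satisfied by every `(b, x) ∈ X`. -/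
def satelliteSet (X : Set (ℝ × V)) : Set (ℝ × V) :=
  {q | ∀ p ∈ X, ‖q.2 - p.2‖ ^ 2 = (q.1 - p.1) ^ 2}

theorem range_subset_positions_satelliteSet (s : ι → V) (t : ι → ℝ) :
    Set.range s ⊆ positions (satelliteSet (solutionSet s t)) := by
  rintro _ ⟨i, rfl⟩
  exact ⟨t i, fun p hp => hp i⟩

variable [InnerProductSpace ℝ V]

/-- The polynomial `q` for which `-q b` is the squared radius of the sphere of solutions at time
`b`. -/
def timeQuadratic (u v : V) (α β b : ℝ) : ℝ :=
  (‖u‖ ^ 2 - 1) * b ^ 2 + 2 * (⟪u, v⟫ - α) * b + (‖v‖ ^ 2 - β)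

/-- `u, α, v, β` are the parameters of the linearized global positioning equations: on the points
`s i`, the time stamp `t i` is the affine function `⟪u, s i⟫ - α` and the Minkowski square
`‖s i‖² - t i²` is the affine function `2⟪s i, v⟫ - β`. Taking `u` in the direction and `v` in
the affine span of the points makes these parameters unique. -/
structure IsLinearization (s : ι → V) (t : ι → ℝ) (u v : V) (α β : ℝ) : Prop where
  u_mem : u ∈ vectorSpan ℝ (Set.range s)
  inner_sub_eq : ∀ i, ⟪u, s i⟫ - α = t i
  v_mem : v ∈ affineSpan ℝ (Set.range s)
  two_mul_inner_sub_eq : ∀ i, 2 * ⟪s i, v⟫ - β = ‖s i‖ ^ 2 - t i ^ 2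

variable {s : ι → V} {t : ι → ℝ} {u v : V} {α β : ℝ}

theorem continuous_timeQuadratic (u v : V) (α β : ℝ) : Continuous (timeQuadratic u v α β) := by
  unfold timeQuadratic
  fun_prop

theorem norm_eq_one_of_timeQuadratic_eq_zero (h : ∀ b, timeQuadratic u v α β b = 0) :
    ‖u‖ = 1 := by
  simp only [timeQuadratic] at h
  exact (pow_eq_one_iff_of_nonneg (norm_nonneg u) two_ne_zero).1 (by linarith [h 0, h 1, h (-1)])

namespace IsLinearization

variable (h : IsLinearization s t u v α β)
include h

theorem ne_zero (ht : ∃ i j, t i ≠ t j) : u ≠ 0 := by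
  rintro rfl
  obtain ⟨i, j, hij⟩ := ht
  exact hij (by rw [← h.inner_sub_eq i, ← h.inner_sub_eq j, inner_zero_left, inner_zero_left])

theorem affineSpan_range_eq_mk' :
    affineSpan ℝ (Set.range s) = AffineSubspace.mk' v (vectorSpan ℝ (Set.range s)) := by
  rw [← direction_affineSpan, AffineSubspace.mk'_eq h.v_mem]

theorem sub_mem_vectorSpan (i : ι) (b : ℝ) : s i - (v + b • u) ∈ vectorSpan ℝ (Set.range s) := by
  have hsv : s i - v ∈ vectorSpan ℝ (Set.range s) :=
    vsub_mem_vectorSpan_of_mem_affineSpan_of_mem_affineSpan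
      (mem_affineSpan ℝ (Set.mem_range_self i)) h.v_mem
  rw [← sub_sub]
  exact Submodule.sub_mem _ hsv (Submodule.smul_mem _ _ h.u_mem)

theorem norm_sub_sq (i : ι) (b : ℝ) :
    ‖s i - (v + b • u)‖ ^ 2 = (t i - b) ^ 2 + timeQuadratic u v α β b := by
  rw [norm_sub_sq_real, norm_add_sq_real, inner_add_right, real_inner_smul_right,
    real_inner_smul_right, norm_smul, mul_pow, Real.norm_eq_abs, sq_abs, real_inner_comm u (s i),
    real_inner_comm u v, timeQuadratic]
  linear_combination (-2 * b) * h.inner_sub_eq i - h.two_mul_inner_sub_eq i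

theorem norm_sub_add_sq (i : ι) (b : ℝ) (w : V) :
    ‖s i - (v + b • u + w)‖ ^ 2 =
      (t i - b) ^ 2 + (timeQuadratic u v α β b + ‖w‖ ^ 2) - 2 * ⟪s i - (v + b • u), w⟫ := by
  rw [← sub_sub, norm_sub_sq_real, h.norm_sub_sq]
  ring

theorem mem_solutionSet_iff {b : ℝ} {w : V} :
    (b, v + b • u + w) ∈ solutionSet s t ↔
      w ∈ (vectorSpan ℝ (Set.range s))ᗮ ∧ timeQuadratic u v α β b + ‖w‖ ^ 2 = 0 := by
  simp only [solutionSet, Set.mem_ofPred_eq, h.norm_sub_add_sq]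
  constructor
  · intro hsol
    have horth : w ∈ (vectorSpan ℝ (Set.range s))ᗮ := by
      refine mem_orthogonal_vectorSpan_range_iff.2 fun i j => ?_
      have hdiff : s i - s j = s i - (v + b • u) - (s j - (v + b • u)) := by abel
      rw [hdiff, inner_sub_left]
      linarith [hsol i, hsol j]
    obtain ⟨_, i, rfl⟩ := (affineSpan_nonempty ℝ).1 ⟨v, h.v_mem⟩
    have hzero := Submodule.inner_right_of_mem_orthogonal (h.sub_mem_vectorSpan i b) horth
    exact ⟨horth, by linarith [hsol i]⟩
  · rintro ⟨horth, hq⟩ i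
    rw [hq, Submodule.inner_right_of_mem_orthogonal (h.sub_mem_vectorSpan i b) horth]
    ring

theorem exists_eq_of_mem_solutionSet {b : ℝ} {x : V} (hx : (b, x) ∈ solutionSet s t) :
    ∃ w ∈ (vectorSpan ℝ (Set.range s))ᗮ,
      x = v + b • u + w ∧ timeQuadratic u v α β b + ‖w‖ ^ 2 = 0 := by
  obtain ⟨w, rfl⟩ : ∃ w, x = v + b • u + w := ⟨x - (v + b • u), by abel⟩
  obtain ⟨horth, hq⟩ := h.mem_solutionSet_iff.1 hx
  exact ⟨w, horth, rfl, hq⟩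

theorem exists_timeQuadratic_ne_zero
    (hsep : Collinear ℝ (Set.range s) → ∃ i j, |t i - t j| ≠ ‖s i - s j‖) :
    ∃ b, timeQuadratic u v α β b ≠ 0 := by
  by_contra! hq
  have hnorm : ‖u‖ = 1 := norm_eq_one_of_timeQuadratic_eq_zero hq
  have hline : ∀ i, s i = v + t i • u := fun i => by
    have hzero : ‖s i - (v + t i • u)‖ ^ 2 = 0 := by
      rw [h.norm_sub_sq, hq, sub_self, zero_pow two_ne_zero, add_zero]
    exact sub_eq_zero.1 (norm_eq_zero.1 (sq_eq_zero_iff.1 hzero))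
  have hcol : Collinear ℝ (Set.range s) := by
    refine (collinear_iff_exists_forall_eq_smul_vadd _).2 ⟨v, u, ?_⟩
    rintro _ ⟨i, rfl⟩
    exact ⟨t i, by rw [vadd_eq_add, add_comm, hline i]⟩
  obtain ⟨i, j, hij⟩ := hsep hcol
  apply hij
  rw [hline i, hline j, add_sub_add_left_eq_sub, ← sub_smul, norm_smul, hnorm, mul_one,
    Real.norm_eq_abs]

theorem exists_timeQuadratic_neg (hX : (solutionSet s t).Nontrivial)
    (hsep : Collinear ℝ (Set.range s) → ∃ i j, |t i - t j| ≠ ‖s i - s j‖) :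
    ∃ b, timeQuadratic u v α β b < 0 := by
  by_contra! hnonneg
  have hroot : ∀ {b x}, (b, x) ∈ solutionSet s t →
      timeQuadratic u v α β b = 0 ∧ x = v + b • u := by
    intro b x hx
    obtain ⟨w, -, rfl, hq⟩ := h.exists_eq_of_mem_solutionSet hx
    obtain ⟨hb, hw⟩ := (add_eq_zero_iff_of_nonneg (hnonneg b) (sq_nonneg _)).1 hq
    rw [sq_eq_zero_iff, norm_eq_zero] at hw
    exact ⟨hb, by rw [hw, add_zero]⟩
  obtain ⟨⟨b₁, x₁⟩, h₁, ⟨b₂, x₂⟩, h₂, hne⟩ := hX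
  obtain ⟨hq₁, rfl⟩ := hroot h₁
  obtain ⟨hq₂, rfl⟩ := hroot h₂
  have hb : b₁ ≠ b₂ := by
    rintro rfl
    exact hne rfl
  obtain ⟨b, hb0⟩ := h.exists_timeQuadratic_ne_zero hsep
  exact hb0 (quadratic_eq_zero_of_nonneg_of_two_roots hb hnonneg hq₁ hq₂ b)

theorem add_mem_solutionSet {b : ℝ} (hb : timeQuadratic u v α β b ≤ 0) {w : V}
    (hw : w ∈ (vectorSpan ℝ (Set.range s))ᗮ) (hnorm : ‖w‖ = √(-timeQuadratic u v α β b)) :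
    (b, v + b • u + w) ∈ solutionSet s t :=
  h.mem_solutionSet_iff.2 ⟨hw, by rw [hnorm, Real.sq_sqrt (neg_nonneg.2 hb), add_neg_cancel]⟩

theorem sub_mem_solutionSet {b : ℝ} (hb : timeQuadratic u v α β b ≤ 0) {w : V}
    (hw : w ∈ (vectorSpan ℝ (Set.range s))ᗮ) (hnorm : ‖w‖ = √(-timeQuadratic u v α β b)) :
    (b, v + b • u - w) ∈ solutionSet s t := by
  rw [sub_eq_add_neg]
  exact h.add_mem_solutionSet hb (Submodule.neg_mem _ hw) (by rwa [norm_neg])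

theorem mem_image_fst_solutionSet [Nontrivial (vectorSpan ℝ (Set.range s))ᗮ] {b : ℝ}
    (hb : timeQuadratic u v α β b ≤ 0) : b ∈ Prod.fst '' solutionSet s t := by
  obtain ⟨w, hw⟩ := exists_norm_eq (vectorSpan ℝ (Set.range s))ᗮ
    (Real.sqrt_nonneg (-timeQuadratic u v α β b))
  exact ⟨_, h.add_mem_solutionSet hb w.2 hw, rfl⟩

theorem nontrivial_image_fst_solutionSet (hX : (solutionSet s t).Nontrivial) {b : ℝ}
    (hb : timeQuadratic u v α β b < 0) : (Prod.fst '' solutionSet s t).Nontrivial := by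
  by_cases hinj : Set.InjOn Prod.fst (solutionSet s t)
  · exact hX.image_of_injOn hinj
  have : Nontrivial (vectorSpan ℝ (Set.range s))ᗮ := by
    refine (Submodule.nontrivial_iff_ne_bot).2 fun hbot => hinj ?_
    rintro ⟨b₁, x₁⟩ h₁ ⟨b₂, x₂⟩ h₂ rfl
    obtain ⟨w₁, hw₁, rfl, -⟩ := h.exists_eq_of_mem_solutionSet h₁
    obtain ⟨w₂, hw₂, rfl, -⟩ := h.exists_eq_of_mem_solutionSet h₂
    rw [hbot, Submodule.mem_bot] at hw₁ hw₂
    rw [hw₁, hw₂]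
  have hnear : ∀ᶠ b' in 𝓝[≠] b, timeQuadratic u v α β b' < 0 :=
    nhdsWithin_le_nhds ((continuous_timeQuadratic u v α β).continuousAt.eventually_lt_const hb)
  obtain ⟨b', hb', hne⟩ := (hnear.and self_mem_nhdsWithin).exists
  exact ⟨b', h.mem_image_fst_solutionSet hb'.le, b, h.mem_image_fst_solutionSet hb.le, hne⟩

theorem orthogonal_le_direction {b : ℝ} (hb : timeQuadratic u v α β b < 0) :
    (vectorSpan ℝ (Set.range s))ᗮ ≤
      (affineSpan ℝ (positions (solutionSet s t))).direction := by
  refine le_of_forall_mem_of_norm_eq (Real.sqrt_pos.2 (neg_pos.2 hb)) fun w hw hnorm => ?_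
  rw [direction_affineSpan]
  have hdiff := vsub_mem_vectorSpan ℝ
    (mem_positions (h.add_mem_solutionSet hb.le hw hnorm))
    (mem_positions (h.sub_mem_solutionSet hb.le hw hnorm))
  rw [vsub_eq_sub, add_sub_sub_cancel, ← two_smul ℝ] at hdiff
  exact (Submodule.smul_mem_iff _ two_ne_zero).1 hdiff

theorem add_smul_mem_affineSpan
    (hdir : (vectorSpan ℝ (Set.range s))ᗮ ≤
      (affineSpan ℝ (positions (solutionSet s t))).direction)
    {b : ℝ} (hb : b ∈ Prod.fst '' solutionSet s t) :
    v + b • u ∈ affineSpan ℝ (positions (solutionSet s t)) := by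
  obtain ⟨⟨b, x⟩, hx, rfl⟩ := hb
  obtain ⟨w, hw, rfl, -⟩ := h.exists_eq_of_mem_solutionSet hx
  have hmem := mem_affineSpan ℝ (mem_positions hx)
  rwa [add_comm, ← vadd_eq_add,
    AffineSubspace.vadd_mem_iff_mem_of_mem_direction (hdir hw)] at hmem

theorem affineSpan_positions_solutionSet_le :
    affineSpan ℝ (positions (solutionSet s t)) ≤
      AffineSubspace.mk' v (Submodule.span ℝ {u} ⊔ (vectorSpan ℝ (Set.range s))ᗮ) := by
  rw [affineSpan_le]
  rintro x ⟨b, hx⟩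
  obtain ⟨w, hw, rfl, -⟩ := h.exists_eq_of_mem_solutionSet hx
  rw [coe_mk'_eq_setOf]
  exact ⟨b • u + w, Submodule.add_mem_sup (Submodule.mem_span_singleton.2 ⟨b, rfl⟩) hw,
    add_assoc _ _ _⟩

theorem affineSpan_positions_solutionSet (hX : (solutionSet s t).Nontrivial)
    (hsep : Collinear ℝ (Set.range s) → ∃ i j, |t i - t j| ≠ ‖s i - s j‖) :
    affineSpan ℝ (positions (solutionSet s t)) =
      AffineSubspace.mk' v (Submodule.span ℝ {u} ⊔ (vectorSpan ℝ (Set.range s))ᗮ) := by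
  set L := affineSpan ℝ (positions (solutionSet s t))
  obtain ⟨b, hb⟩ := h.exists_timeQuadratic_neg hX hsep
  have hdir := h.orthogonal_le_direction hb
  obtain ⟨b₁, hb₁, b₂, hb₂, hne⟩ := h.nontrivial_image_fst_solutionSet hX hb
  have hu : u ∈ L.direction := by
    have hdiff := AffineSubspace.vsub_mem_direction (h.add_smul_mem_affineSpan hdir hb₁)
      (h.add_smul_mem_affineSpan hdir hb₂)
    rw [vsub_eq_sub, add_sub_add_left_eq_sub, ← sub_smul] at hdiff
    exact (Submodule.smul_mem_iff _ (sub_ne_zero.2 hne)).1 hdiff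
  have hv : v ∈ L := by
    have hmem := h.add_smul_mem_affineSpan hdir hb₁
    rwa [add_comm, ← vadd_eq_add, AffineSubspace.vadd_mem_iff_mem_of_mem_direction
      (Submodule.smul_mem _ b₁ hu)] at hmem
  refine le_antisymm h.affineSpan_positions_solutionSet_le ?_
  rw [← AffineSubspace.mk'_eq hv, AffineSubspace.mk'_le_mk'_iff]
  exact sup_le ((Submodule.span_singleton_le_iff_mem _ _).2 hu) hdir

theorem positions_satelliteSet_subset [(vectorSpan ℝ (Set.range s)).HasOrthogonalProjection]
    {b : ℝ} (hb : timeQuadratic u v α β b < 0) :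
    positions (satelliteSet (solutionSet s t)) ⊆ affineSpan ℝ (Set.range s) := by
  rintro y ⟨τ, hy⟩
  have horth : (vectorSpan ℝ (Set.range s))ᗮ ≤ (Submodule.span ℝ {y - (v + b • u)})ᗮ := by
    refine le_of_forall_mem_of_norm_eq (Real.sqrt_pos.2 (neg_pos.2 hb)) fun w hw hnorm => ?_
    have hadd : ‖y - (v + b • u + w)‖ ^ 2 = (τ - b) ^ 2 :=
      hy _ (h.add_mem_solutionSet hb.le hw hnorm)
    have hsub : ‖y - (v + b • u - w)‖ ^ 2 = (τ - b) ^ 2 :=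
      hy _ (h.sub_mem_solutionSet hb.le hw hnorm)
    rw [← sub_sub, norm_sub_sq_real] at hadd
    rw [← sub_add, norm_add_sq_real] at hsub
    rw [Submodule.mem_orthogonal_singleton_iff_inner_right]
    linarith
  have hmem : y - (v + b • u) ∈ vectorSpan ℝ (Set.range s) := by
    rw [← Submodule.orthogonal_orthogonal (vectorSpan ℝ (Set.range s))]
    exact Submodule.orthogonal_le horth
      (Submodule.le_orthogonal_orthogonal _ (Submodule.mem_span_singleton_self _))
  rw [h.affineSpan_range_eq_mk', coe_mk'_eq_setOf]
  exact ⟨y - (v + b • u) + b • u, Submodule.add_mem _ hmem (Submodule.smul_mem _ _ h.u_mem),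
    by abel⟩

theorem affineSpan_positions_satelliteSet
    [(vectorSpan ℝ (Set.range s)).HasOrthogonalProjection] (hX : (solutionSet s t).Nontrivial)
    (hsep : Collinear ℝ (Set.range s) → ∃ i j, |t i - t j| ≠ ‖s i - s j‖) :
    affineSpan ℝ (positions (satelliteSet (solutionSet s t))) = affineSpan ℝ (Set.range s) := by
  obtain ⟨b, hb⟩ := h.exists_timeQuadratic_neg hX hsep
  exact le_antisymm (affineSpan_le.2 (h.positions_satelliteSet_subset hb))
    (affineSpan_mono ℝ (range_subset_positions_satelliteSet s t))

end IsLinearization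

theorem stmt_11_general [(vectorSpan ℝ (Set.range s)).HasOrthogonalProjection]
    (h : IsLinearization s t u v α β) (ht : ∃ i j, t i ≠ t j) (hX : (solutionSet s t).Nontrivial)
    (hsep : Collinear ℝ (Set.range s) → ∃ i j, |t i - t j| ≠ ‖s i - s j‖) :
    affineSpan ℝ (positions (solutionSet s t)) =
      AffineSubspace.mk' v (Submodule.span ℝ {u} ⊔ (vectorSpan ℝ (Set.range s))ᗮ) ∧
    Module.rank ℝ ↥(Submodule.span ℝ {u} ⊔ (vectorSpan ℝ (Set.range s))ᗮ) =
      Module.rank ℝ (vectorSpan ℝ (Set.range s))ᗮ + 1 ∧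
    affineSpan ℝ (positions (satelliteSet (solutionSet s t))) = affineSpan ℝ (Set.range s) ∧
    affineSpan ℝ (Set.range s) = AffineSubspace.mk' v (vectorSpan ℝ (Set.range s)) ∧
    AffineSubspace.mk' v (Submodule.span ℝ {u} ⊔ (vectorSpan ℝ (Set.range s))ᗮ) ⊓
        AffineSubspace.mk' v (vectorSpan ℝ (Set.range s)) =
      AffineSubspace.mk' v (Submodule.span ℝ {u}) :=
  ⟨h.affineSpan_positions_solutionSet hX hsep,
    rank_span_singleton_sup_orthogonal h.u_mem (h.ne_zero ht),
    h.affineSpan_positions_satelliteSet hX hsep, h.affineSpan_range_eq_mk',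
    by rw [mk'_inf_mk', span_singleton_sup_orthogonal_inf h.u_mem]⟩

end GlobalPositioning

theorem stmt_11 {n m : ℕ} [NeZero m] (hn : 1 ≤ n) (hm : m ≤ n + 1)
    (s : Fin m → EuclideanSpace ℝ (Fin n)) (t : Fin m → ℝ)
    (hindep : AffineIndependent ℝ s)
    (u v : EuclideanSpace ℝ (Fin n)) (α β : ℝ)
    (hu : u ∈ Submodule.span ℝ (Set.range fun i => s i - s 0))
    (hα : ∀ i, ⟪u, s i⟫ - α = t i)
    (hv : v ∈ affineSpan ℝ (Set.range s))
    (hβ : ∀ i, 2 * ⟪s i, v⟫ - β = ‖s i‖ ^ 2 - t i ^ 2)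
    {k : ℕ} (hk : k = n - (m - 1))
    (X : Set (ℝ × EuclideanSpace ℝ (Fin n)))
    (hX : X = {p : ℝ × EuclideanSpace ℝ (Fin n) | ∀ i, ‖s i - p.2‖ ^ 2 = (t i - p.1) ^ 2})
    (S : Set (ℝ × EuclideanSpace ℝ (Fin n)))
    (hS : S = {q : ℝ × EuclideanSpace ℝ (Fin n) | ∀ p ∈ X, ‖q.2 - p.2‖ ^ 2 = (q.1 - p.1) ^ 2})
    (Qsol : Set (EuclideanSpace ℝ (Fin n)))
    (hQsol : Qsol = {x : EuclideanSpace ℝ (Fin n) | ∃ b : ℝ, (b, x) ∈ X})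
    (Qsat : Set (EuclideanSpace ℝ (Fin n)))
    (hQsat : Qsat = {x : EuclideanSpace ℝ (Fin n) | ∃ τ : ℝ, (τ, x) ∈ S})
    (htne : ∃ i j : Fin m, t i ≠ t j)
    (hX2 : X.Nontrivial)
    (hcase : 2 < m ∨ ∀ i j : Fin m, i ≠ j → |t i - t j| ≠ ‖s i - s j‖) :
    (affineSpan ℝ Qsol : Set (EuclideanSpace ℝ (Fin n)))
      = {x : EuclideanSpace ℝ (Fin n) | ∃ y ∈ Submodule.span ℝ ({u} : Set (EuclideanSpace ℝ (Fin n)))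
          ⊔ (Submodule.span ℝ (Set.range fun i => s i - s 0))ᗮ, x = v + y} ∧
    Module.finrank ℝ ↥(Submodule.span ℝ ({u} : Set (EuclideanSpace ℝ (Fin n)))
        ⊔ (Submodule.span ℝ (Set.range fun i => s i - s 0))ᗮ) = k + 1 ∧
    affineSpan ℝ Qsat = affineSpan ℝ (Set.range s) ∧
    (affineSpan ℝ (Set.range s) : Set (EuclideanSpace ℝ (Fin n)))
      = {x : EuclideanSpace ℝ (Fin n) | ∃ y ∈ Submodule.span ℝ (Set.range fun i => s i - s 0), x = v + y} ∧
    Module.finrank ℝ ↥(Submodule.span ℝ (Set.range fun i => s i - s 0)) = m - 1 ∧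
    {x : EuclideanSpace ℝ (Fin n) | ∃ y ∈ Submodule.span ℝ ({u} : Set (EuclideanSpace ℝ (Fin n)))
        ⊔ (Submodule.span ℝ (Set.range fun i => s i - s 0))ᗮ, x = v + y}
      ∩ {x : EuclideanSpace ℝ (Fin n) | ∃ y ∈ Submodule.span ℝ (Set.range fun i => s i - s 0), x = v + y}
      = {x : EuclideanSpace ℝ (Fin n) | ∃ lam : ℝ, x = v + lam • u} := by
  subst hX hS hQsol hQsat hk
  have hU : Submodule.span ℝ (Set.range fun i => s i - s 0) = vectorSpan ℝ (Set.range s) :=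
    (vectorSpan_range_eq_span_range_vsub_right ℝ s 0).symm
  rw [hU] at hu ⊢
  have hfinrank : Module.finrank ℝ (vectorSpan ℝ (Set.range s)) = m - 1 := by
    simpa using Nat.eq_sub_of_add_eq hindep.finrank_vectorSpan_add_one
  have hsep : Collinear ℝ (Set.range s) → ∃ i j, |t i - t j| ≠ ‖s i - s j‖ := by
    intro hcol
    obtain ⟨i, j, hij⟩ := htne
    have hle := hcol.finrank_le_one
    exact ⟨i, j, hcase.resolve_left (by omega) i j (ne_of_apply_ne t hij)⟩
  obtain ⟨hsol, hrank, hsat, hspan, hinf⟩ := stmt_11_general ⟨hu, hα, hv, hβ⟩ htne hX2 hsep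
  have hperp := (vectorSpan ℝ (Set.range s)).finrank_add_finrank_orthogonal
  rw [hfinrank, finrank_euclideanSpace_fin] at hperp
  simp only [← coe_mk'_eq_setOf, ← coe_mk'_span_singleton]
  refine ⟨SetLike.coe_set_eq.2 hsol, Module.finrank_eq_of_rank_eq ?_, hsat,
    SetLike.coe_set_eq.2 hspan, hfinrank, SetLike.coe_set_eq.2 hinf⟩
  rw [hrank, ← Module.finrank_eq_rank, Nat.eq_sub_of_add_eq' hperp, Nat.cast_add, Nat.cast_one]
end
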